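/- arXiv:1909.06193 — 3 statements merged into one kernel-verified Lean document; each statement's English description precedes it below -/
import Mathlib

section
/- (Theorem 3.) There exists a constant C = C(d) > 0 depending only on d with the following property. Let X_1,…,X_n, Y_1,…,Y_n (n ≥ 2) be random variables with values in [0,1]^d such that the couples (X_1,Y_1),…,(X_n,Y_n) are pairwise independent and, for every k = 1,…,n, X_k and Y_k have the same distribution. Then for the empirical measures μ_n = (1/n)Σ_{k=1}^n δ_{X_k} and ν_n = (1/n)Σ_{k=1}^n δ_{Y_k}: E(W₁(μ_n,ν_n)) ≤ C/√n if d = 1; E(W₁(μ_n,ν_n)) ≤ C·√(log n / n) if d = 2; and E(W₁(μ_n,ν_n)) ≤ C/n^{1/d} if d ≥ 3. -/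
open MeasureTheory ProbabilityTheory Real ENNReal

noncomputable section

/-- Euclidean distance on `Fin d → ℝ`. -/
def euclidDist {d : ℕ} (x y : Fin d → ℝ) : ℝ := Real.sqrt (∑ i, (x i - y i) ^ 2)

/-- `γ` is a coupling of `μ` and `ν`. -/
def IsCoupling {α : Type*} [MeasurableSpace α]
    (γ : Measure (α × α)) (μ ν : Measure α) : Prop :=
  γ.map Prod.fst = μ ∧ γ.map Prod.snd = ν

/-- Optimal transport cost for a cost function `c`. -/
def transportCost {α : Type*} [MeasurableSpace α] (c : α → α → ℝ)
    (μ ν : Measure α) : ℝ≥0∞ :=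
  ⨅ (γ : Measure (α × α)) (_ : IsCoupling γ μ ν),
    ∫⁻ p, ENNReal.ofReal (c p.1 p.2) ∂γ

/-- Euclidean Kantorovich distance `W₁`. -/
def W1 {d : ℕ} (μ ν : Measure (Fin d → ℝ)) : ℝ≥0∞ := transportCost euclidDist μ ν

/-- The empirical measure `(1/n) Σ_k δ_{X_k(ω)}`. -/
def empMeasure {d n : ℕ} {Ω : Type*} [MeasurableSpace Ω]
    (X : Fin n → Ω → (Fin d → ℝ)) (ω : Ω) : Measure (Fin d → ℝ) :=
  (n : ℝ≥0∞)⁻¹ • ∑ k, Measure.dirac (X k ω)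

lemma euclidDist_self {d : ℕ} (x : Fin d → ℝ) : euclidDist x x = 0 := by
  simp [euclidDist]

lemma euclidDist_eq {d : ℕ} (x y : Fin d → ℝ) :
    euclidDist x y = dist (WithLp.toLp 2 x) (WithLp.toLp 2 y) := by
  simp [euclidDist, EuclideanSpace.dist_eq, Real.dist_eq, sq_abs]

lemma euclidDist_nonneg {d : ℕ} (x y : Fin d → ℝ) : 0 ≤ euclidDist x y := Real.sqrt_nonneg _

lemma euclidDist_tri {d : ℕ} (x y z : Fin d → ℝ) :
    euclidDist x z ≤ euclidDist x y + euclidDist y z := by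
  simp only [euclidDist_eq]; exact dist_triangle _ _ _

lemma euclidDist_comm {d : ℕ} (x y : Fin d → ℝ) :
    euclidDist x y = euclidDist y x := by
  simp only [euclidDist_eq]; exact dist_comm _ _

/-- Finite duality. -/
lemma finite_duality {n : ℕ} (hn : 0 < n) (c : Fin n → Fin n → ℝ) (B : ℝ)
    (h : ∀ φ ψ : Fin n → ℝ, (∀ i j, φ i + ψ j ≤ c i j) →
      (∑ i, (φ i + ψ i)) / n ≤ B) :
    ∃ w : Fin n → Fin n → ℝ, (∀ i j, 0 ≤ w i j) ∧ (∀ i, ∑ j, w i j = 1 / n) ∧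
      (∀ j, ∑ i, w i j = 1 / n) ∧ ∑ i, ∑ j, c i j * w i j ≤ B := by
  classical
  have hn' : (0 : ℝ) < n := by exact_mod_cast hn
  by_contra hcon
  push Not at hcon
  let L : (Fin n × Fin n → ℝ) →ₗ[ℝ] (Fin n → ℝ) × (Fin n → ℝ) × ℝ :=
    { toFun := fun w => (fun i => ∑ j, w (i, j), fun j => ∑ i, w (i, j),
        ∑ i, ∑ j, c i j * w (i, j))
      map_add' := by
        intro a b
        simp only [Pi.add_apply, mul_add, Finset.sum_add_distrib, Prod.mk_add_mk]
        rfl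
      map_smul' := by
        intro r a
        simp only [Pi.smul_apply, smul_eq_mul, RingHom.id_apply, Prod.smul_mk]
        refine Prod.ext ?_ (Prod.ext ?_ ?_)
        · ext i; simp [Finset.mul_sum]
        · ext i; simp [Finset.mul_sum]
        · simp only [Finset.mul_sum]
          refine Finset.sum_congr rfl fun i _ => Finset.sum_congr rfl fun j _ => by ring }
  have hLc : Continuous L := L.continuous_of_finiteDimensional
  set A := L '' (stdSimplex ℝ (Fin n × Fin n)) with hA
  let z : Fin n → ℝ := fun _ => 1 / n
  let Bs : Set ((Fin n → ℝ) × (Fin n → ℝ) × ℝ) := {z} ×ˢ {z} ×ˢ Set.Iic B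
  have hAconv : Convex ℝ A := (convex_stdSimplex ℝ _).linear_image L
  have hAcomp : IsCompact A := (isCompact_stdSimplex ℝ _).image hLc
  have hBconv : Convex ℝ Bs := (convex_singleton z).prod ((convex_singleton z).prod (convex_Iic B))
  have hBcl : IsClosed Bs := isClosed_singleton.prod (isClosed_singleton.prod isClosed_Iic)
  have hdisj : Disjoint A Bs := by
    rw [Set.disjoint_left]
    rintro _ ⟨w, hw, rfl⟩ hB
    obtain ⟨h1, h2, h3⟩ := hB
    have h1 : (fun i => ∑ j, w (i, j)) = z := h1
    have h2 : (fun j => ∑ i, w (i, j)) = z := h2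
    have h3 : ∑ i, ∑ j, c i j * w (i, j) ≤ B := h3
    have := hcon (fun i j => w (i, j)) (fun i j => hw.1 _) (fun i => congrFun h1 i)
      (fun i => congrFun h2 i)
    linarith
  obtain ⟨F, u, v, hFA, huv, hFB⟩ :=
    geometric_hahn_banach_compact_closed hAconv hAcomp hBconv hBcl hdisj
  let α : Fin n → ℝ := fun i => F (Pi.single i 1, 0, 0)
  let β : Fin n → ℝ := fun i => F (0, Pi.single i 1, 0)
  let l : ℝ := - F (0, 0, 1)
  have hF : ∀ a b t, F (a, b, t) = ∑ i, a i * α i + ∑ j, b j * β j - t * l := by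
    intro a b t
    have h1 : (a, b, t) = ∑ i, a i • ((Pi.single i 1, 0, 0) : (Fin n → ℝ) × (Fin n → ℝ) × ℝ)
        + ∑ i, b i • ((0, Pi.single i 1, 0) : (Fin n → ℝ) × (Fin n → ℝ) × ℝ)
        + t • ((0, 0, 1) : (Fin n → ℝ) × (Fin n → ℝ) × ℝ) := by
      refine Prod.ext ?_ (Prod.ext ?_ ?_)
      · simp [Prod.fst_sum]
        ext i; simp [Finset.sum_apply, Pi.single_apply]
      · simp [Prod.fst_sum, Prod.snd_sum]
        ext i; simp [Finset.sum_apply, Pi.single_apply]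
      · simp [Prod.snd_sum]
    rw [h1]
    simp only [map_add, map_sum, map_smul, smul_eq_mul, α, β, l]
    ring
  -- value on A at vertices
  have hv : ∀ i j, α i + β j - c i j * l < u := by
    intro i j
    have := hFA (L (Pi.single (i, j) 1)) ⟨_, single_mem_stdSimplex ℝ (i, j), rfl⟩
    have h2 : L (Pi.single (i, j) 1) = (Pi.single i 1, Pi.single j 1, c i j) := by
      refine Prod.ext ?_ (Prod.ext ?_ ?_)
      · ext k
        simp only [L, LinearMap.coe_mk, AddHom.coe_mk, Pi.single_apply, Prod.mk.injEq]
        by_cases hk : k = i <;> simp [hk]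
      · ext k
        simp only [L, LinearMap.coe_mk, AddHom.coe_mk, Pi.single_apply, Prod.mk.injEq]
        by_cases hk : k = j <;> simp [hk]
      · simp only [L, LinearMap.coe_mk, AddHom.coe_mk, Pi.single_apply, Prod.mk.injEq]
        simp [ite_and]
    rw [h2, hF] at this
    simpa [Pi.single_apply] using this
  have hb : ∀ t ≤ B, v < (∑ i, α i) / n + (∑ i, β i) / n - t * l := by
    intro t ht
    have := hFB (z, z, t) ⟨rfl, rfl, ht⟩
    rw [hF] at this
    simp only [z, ← Finset.mul_sum] at this
    calc v < _ := this
      _ = _ := by ring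
  have hl0 : 0 ≤ l := by
    by_contra hl
    push Not at hl
    set S := (∑ i, α i) / n + (∑ i, β i) / n with hS
    have h1 := hb (min B ((S - v) / l)) (min_le_left _ _)
    have h2 : (S - v) / l * l ≤ min B ((S - v) / l) * l :=
      mul_le_mul_of_nonpos_right (min_le_right _ _) hl.le
    rw [div_mul_cancel₀ _ hl.ne] at h2
    linarith
  have hB := hb B le_rfl
  have hsum : ∀ (a b : Fin n → ℝ) , (∑ i, (a i + b i)) / n = (∑ i, a i) / n + (∑ i, b i) / n := by
    intro a b; rw [Finset.sum_add_distrib, add_div]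
  rcases hl0.eq_or_lt with hl | hl
  · have : ∑ i, (α i + β i) ≤ ∑ i : Fin n, u :=
      Finset.sum_le_sum fun i _ => by have := hv i i; rw [← hl] at this; linarith
    simp only [Finset.sum_const, Finset.card_univ, Fintype.card_fin, nsmul_eq_mul] at this
    have h3 : (∑ i, (α i + β i)) / n ≤ u := by
      rw [div_le_iff₀ hn']; linarith
    rw [hsum] at h3
    rw [← hl] at hB
    linarith
  · have h3 := h (fun i => (α i - u) / l) (fun i => β i / l) (by
      intro i j
      have := hv i j
      rw [← add_div, div_le_iff₀ hl]; linarith)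
    have h4 : (∑ i, ((α i - u) / l + β i / l)) / n
        = ((∑ i, α i) / n + (∑ i, β i) / n - u) / l := by
      rw [hsum, ← Finset.sum_div, ← Finset.sum_div, Finset.sum_sub_distrib]
      simp only [Finset.sum_const, Finset.card_univ, Fintype.card_fin, nsmul_eq_mul]
      field_simp
      ring
    rw [h4, div_le_iff₀ hl] at h3
    linarith

lemma W1_le_of_dual {d n : ℕ} (hn : 0 < n) (x y : Fin n → Fin d → ℝ) (B : ℝ)
    (h : ∀ f : (Fin d → ℝ) → ℝ, (∀ u v, |f u - f v| ≤ euclidDist u v) →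
      (∑ k, (f (x k) - f (y k))) / n ≤ B) :
    W1 ((n : ℝ≥0∞)⁻¹ • ∑ k, Measure.dirac (x k)) ((n : ℝ≥0∞)⁻¹ • ∑ k, Measure.dirac (y k))
      ≤ ENNReal.ofReal B := by
  classical
  have hn' : (0 : ℝ) < n := by exact_mod_cast hn
  have : Nonempty (Fin n) := ⟨⟨0, hn⟩⟩
  obtain ⟨w, h0, h1, h2, h3⟩ := finite_duality hn (fun i j => euclidDist (x i) (y j)) B (by
    intro φ ψ hφ
    let f : (Fin d → ℝ) → ℝ := fun u =>
      Finset.univ.inf' Finset.univ_nonempty (fun j => euclidDist u (y j) - ψ j)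
    have hf1 : ∀ u v, f u ≤ f v + euclidDist u v := by
      intro u v
      obtain ⟨j, _, hj⟩ := Finset.exists_mem_eq_inf' (Finset.univ_nonempty)
        (fun j => euclidDist v (y j) - ψ j)
      have h5 : f v = euclidDist v (y j) - ψ j := hj
      have h6 : f u ≤ euclidDist u (y j) - ψ j := Finset.inf'_le _ (Finset.mem_univ j)
      have := euclidDist_tri u v (y j)
      linarith
    have hf2 : ∀ i, φ i ≤ f (x i) := by
      intro i
      refine Finset.le_inf' _ _ fun j _ => ?_
      linarith [hφ i j]
    have hf3 : ∀ i, ψ i ≤ - f (y i) := by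
      intro i
      have h6 : f (y i) ≤ euclidDist (y i) (y i) - ψ i := Finset.inf'_le _ (Finset.mem_univ i)
      rw [euclidDist_self] at h6
      linarith
    refine le_trans ?_ (h f ?_)
    · gcongr with i
      linarith [hf2 i, hf3 i]
    · intro u v
      rw [abs_le]
      have := hf1 u v
      have := hf1 v u
      rw [euclidDist_comm v u] at this
      constructor <;> linarith)
  let γ : Measure ((Fin d → ℝ) × (Fin d → ℝ)) :=
    ∑ i, ∑ j, ENNReal.ofReal (w i j) • Measure.dirac (x i, y j)
  have hinv : ENNReal.ofReal (1 / n) = (n : ℝ≥0∞)⁻¹ := by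
    rw [one_div, ENNReal.ofReal_inv_of_pos hn', ENNReal.ofReal_natCast]
  have hmap : ∀ (p : (Fin d → ℝ) × (Fin d → ℝ) → (Fin d → ℝ)), Measurable p →
      γ.map p = ∑ i, ∑ j, ENNReal.ofReal (w i j) • Measure.dirac (p (x i, y j)) := by
    intro p hp
    simp only [γ, ← Measure.mapₗ_apply_of_measurable hp, map_sum, map_smul]
    simp only [Measure.mapₗ_apply_of_measurable hp, Measure.map_dirac' hp]
  have hcoup : IsCoupling γ ((n : ℝ≥0∞)⁻¹ • ∑ k, Measure.dirac (x k))
      ((n : ℝ≥0∞)⁻¹ • ∑ k, Measure.dirac (y k)) := by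
    constructor
    · rw [hmap _ measurable_fst, Finset.smul_sum]
      refine Finset.sum_congr rfl fun i _ => ?_
      dsimp only
      rw [← Finset.sum_smul, ← ENNReal.ofReal_sum_of_nonneg (fun j _ => h0 i j), h1, hinv]
    · rw [hmap _ measurable_snd, Finset.smul_sum, Finset.sum_comm]
      refine Finset.sum_congr rfl fun j _ => ?_
      dsimp only
      rw [← Finset.sum_smul, ← ENNReal.ofReal_sum_of_nonneg (fun i _ => h0 i j), h2, hinv]
  refine le_trans (iInf₂_le γ hcoup) ?_
  refine le_trans (le_of_eq ?_) (ENNReal.ofReal_le_ofReal h3)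
  simp only [γ, lintegral_finsetSum_measure, lintegral_smul_measure, lintegral_dirac, smul_eq_mul]
  rw [ENNReal.ofReal_sum_of_nonneg]
  · refine Finset.sum_congr rfl fun i _ => ?_
    rw [ENNReal.ofReal_sum_of_nonneg]
    · refine Finset.sum_congr rfl fun j _ => ?_
      rw [mul_comm, ENNReal.ofReal_mul (euclidDist_nonneg _ _)]
    · intro j _; exact mul_nonneg (euclidDist_nonneg _ _) (h0 i j)
  · intro i _
    exact Finset.sum_nonneg fun j _ => mul_nonneg (euclidDist_nonneg _ _) (h0 i j)

/-- Characters. -/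
def chr {d M : ℕ} [NeZero M] (m g : Fin d → ZMod M) : ℂ := ZMod.stdAddChar (∑ i, m i * g i)

lemma chr_norm {d M : ℕ} [NeZero M] (m g : Fin d → ZMod M) : ‖chr m g‖ = 1 := by
  simp [chr, AddChar.norm_apply]

lemma chr_add {d M : ℕ} [NeZero M] (m g h : Fin d → ZMod M) :
    chr m (g + h) = chr m g * chr m h := by
  simp only [chr, Pi.add_apply, mul_add, Finset.sum_add_distrib, AddChar.map_add_eq_mul]

lemma chr_neg {d M : ℕ} [NeZero M] (m g : Fin d → ZMod M) :
    chr m (-g) = (starRingEnd ℂ) (chr m g) := by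
  simp only [chr, Pi.neg_apply, mul_neg, Finset.sum_neg_distrib, AddChar.map_neg_eq_conj]

lemma chr_zero_left {d M : ℕ} [NeZero M] (g : Fin d → ZMod M) :
    chr 0 g = 1 := by
  simp [chr]

lemma chr_single {d M : ℕ} [NeZero M] (m : Fin d → ZMod M) (i : Fin d) :
    chr m (Pi.single i 1) = ZMod.stdAddChar (m i) := by
  simp [chr, Pi.single_apply]

lemma stdAddChar_sum {M : ℕ} {ι : Type*} [NeZero M] (s : Finset ι) (f : ι → ZMod M) :
    (ZMod.stdAddChar (∑ i ∈ s, f i) : ℂ) = ∏ i ∈ s, ZMod.stdAddChar (f i) := by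
  classical
  induction s using Finset.induction_on with
  | empty => simp
  | insert a s ha ih => rw [Finset.sum_insert ha, Finset.prod_insert ha, AddChar.map_add_eq_mul, ih]

lemma chr_sum {d M : ℕ} [NeZero M] (g : Fin d → ZMod M) :
    ∑ m, chr m g = if g = 0 then ((M : ℂ) ^ d) else 0 := by
  classical
  simp only [chr, stdAddChar_sum]
  have h := Finset.sum_prod_piFinset (Finset.univ : Finset (ZMod M))
    (fun (i : Fin d) (a : ZMod M) => (ZMod.stdAddChar (a * g i) : ℂ))
  simp only [Fintype.piFinset_univ] at h
  rw [h]
  simp only [AddChar.sum_mulShift _ (ZMod.isPrimitive_stdAddChar M), ZMod.card]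
  split_ifs with hg
  · subst hg; simp
  · obtain ⟨i, hi⟩ : ∃ i, g i ≠ 0 := by
      by_contra hc; push Not at hc; exact hg (funext hc)
    exact Finset.prod_eq_zero (Finset.mem_univ i) (by simp [hi])

/-- Fourier transform. -/
def ft {d M : ℕ} [NeZero M] (F : (Fin d → ZMod M) → ℂ) (m : Fin d → ZMod M) : ℂ :=
  ∑ g, F g * chr m g

lemma ft_inv {d M : ℕ} [NeZero M] (F : (Fin d → ZMod M) → ℂ) (p : Fin d → ZMod M) :
    ∑ m, ft F m * (starRingEnd ℂ) (chr m p) = (M : ℂ) ^ d * F p := by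
  classical
  simp only [ft, Finset.sum_mul]
  rw [Finset.sum_comm]
  have : ∀ g, ∑ m, F g * chr m g * (starRingEnd ℂ) (chr m p)
      = if g = p then (M : ℂ) ^ d * F p else 0 := by
    intro g
    simp only [← chr_neg, mul_assoc, ← chr_add, ← Finset.mul_sum, chr_sum]
    by_cases h : g = p
    · subst h; simp [mul_comm]
    · have : ¬ (g + -p = 0) := by rwa [← sub_eq_add_neg, sub_eq_zero]
      simp [h, this]
  simp [this]

lemma ft_parseval {d M : ℕ} [NeZero M] (F : (Fin d → ZMod M) → ℂ) :
    ∑ m, ‖ft F m‖ ^ 2 = (M : ℝ) ^ d * ∑ g, ‖F g‖ ^ 2 := by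
  have h : (∑ m, ft F m * (starRingEnd ℂ) (ft F m)) =
      (M : ℂ) ^ d * ∑ g, F g * (starRingEnd ℂ) (F g) := by
    have : ∀ m, ft F m * (starRingEnd ℂ) (ft F m) =
        ∑ g, (starRingEnd ℂ) (F g) * (ft F m * (starRingEnd ℂ) (chr m g)) := by
      intro m
      conv_lhs => rw [show (starRingEnd ℂ) (ft F m) = ∑ g, (starRingEnd ℂ) (F g) *
        (starRingEnd ℂ) (chr m g) by simp [ft]]
      rw [Finset.mul_sum]
      refine Finset.sum_congr rfl fun g _ => by ring
    simp only [this]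
    rw [Finset.sum_comm]
    simp only [← Finset.mul_sum, ft_inv]
    rw [Finset.mul_sum]
    refine Finset.sum_congr rfl fun g _ => by ring
  simp only [Complex.mul_conj'] at h
  exact_mod_cast h

lemma ft_diff {d M : ℕ} [NeZero M] (F : (Fin d → ZMod M) → ℂ) (i : Fin d) (m : Fin d → ZMod M) :
    ft (fun g => F (g - Pi.single i 1) - F g) m = (ZMod.stdAddChar (m i) - 1) * ft F m := by
  simp only [ft, sub_mul, Finset.sum_sub_distrib, one_mul]
  congr 1
  rw [← Equiv.sum_comp (Equiv.addRight (Pi.single i (1 : ZMod M))), Finset.mul_sum]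
  refine Finset.sum_congr rfl fun g _ => ?_
  simp only [Equiv.coe_addRight, add_sub_cancel_right, chr_add, chr_single]
  ring

lemma stdAddChar_lower {M : ℕ} [NeZero M] (a : ZMod M) :
    16 / (M : ℝ) ^ 2 * (a.valMinAbs : ℝ) ^ 2 ≤ ‖(ZMod.stdAddChar a : ℂ) - 1‖ ^ 2 := by
  have hM : (0 : ℝ) < M := by exact_mod_cast Nat.pos_of_ne_zero (NeZero.ne M)
  set j := a.valMinAbs with hj
  have h1 : (ZMod.stdAddChar a : ℂ) = Complex.exp (Complex.I * ((2 * Real.pi * j / M : ℝ) : ℂ)) := by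
    conv_lhs => rw [← ZMod.coe_valMinAbs a, ZMod.stdAddChar_coe]
    congr 1
    push_cast
    ring
  have h2 : |(j : ℝ)| * 2 ≤ M := by
    have := ZMod.valMinAbs_mem_Ioc a
    have h3 : |j| * 2 ≤ M := by
      rw [Set.mem_Ioc] at this
      rw [← hj] at this
      rcases abs_cases j with h | h <;> omega
    exact_mod_cast h3
  rw [h1, Complex.norm_exp_I_mul_ofReal_sub_one]
  have h4 : 2 / Real.pi * (Real.pi * |(j : ℝ)| / M) ≤ Real.sin (Real.pi * |(j : ℝ)| / M) := by
    apply Real.mul_le_sin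
    · positivity
    · rw [div_le_iff₀ hM]; nlinarith [Real.pi_pos]
  have h5 : 2 / Real.pi * (Real.pi * |(j : ℝ)| / M) = 2 * |(j : ℝ)| / M := by
    field_simp
  rw [h5] at h4
  have h6 : ‖2 * Real.sin (2 * Real.pi * j / M / 2)‖ ^ 2
      = (2 * Real.sin (Real.pi * |(j : ℝ)| / M)) ^ 2 := by
    rw [Real.norm_eq_abs, sq_abs]
    rcases abs_cases (j : ℝ) with ⟨h, _⟩ | ⟨h, _⟩
    · rw [h]; congr 3; ring
    · rw [h, show Real.pi * -(j : ℝ) / M = - (2 * Real.pi * j / M / 2) by ring, Real.sin_neg]; ring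
  rw [h6]
  have h7 : 16 / (M : ℝ) ^ 2 * (j : ℝ) ^ 2 = (2 * (2 * |(j : ℝ)| / M)) ^ 2 := by
    rw [mul_pow, div_pow, mul_pow, sq_abs]; ring
  rw [h7]
  gcongr

/-- Squared frequency. -/
def qf {d M : ℕ} (m : Fin d → ZMod M) : ℝ := ∑ i, ((m i).valMinAbs : ℝ) ^ 2

lemma qf_pos {d M : ℕ} [NeZero M] {m : Fin d → ZMod M} (hm : m ≠ 0) : 0 < qf m := by
  obtain ⟨i, hi⟩ : ∃ i, m i ≠ 0 := by
    by_contra hc; push Not at hc; exact hm (funext hc)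
  refine Finset.sum_pos' (fun i _ => sq_nonneg _) ⟨i, Finset.mem_univ i, ?_⟩
  have : (m i).valMinAbs ≠ 0 := by simpa [ZMod.valMinAbs_eq_zero] using hi
  positivity

lemma fourier_bound {d M n : ℕ} [NeZero M] (F : (Fin d → ZMod M) → ℝ) (δ : ℝ)
    (hF : ∀ g i, |F (g - Pi.single i 1) - F g| ≤ δ) (p q : Fin n → Fin d → ZMod M) :
    (∑ k, (F (p k) - F (q k))) ^ 2 ≤ d * δ ^ 2 * ∑ m ∈ (Finset.univ.erase 0 : Finset (Fin d → ZMod M)),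
      ‖∑ k, (chr m (p k) - chr m (q k))‖ ^ 2 * (M ^ 2 / 16 / qf m) := by
  classical
  have hM : (0 : ℝ) < M := by exact_mod_cast Nat.pos_of_ne_zero (NeZero.ne M)
  set S : (Fin d → ZMod M) → ℂ := fun m => ∑ k, (chr m (p k) - chr m (q k)) with hS
  set Fc : (Fin d → ZMod M) → ℂ := fun g => (F g : ℂ) with hFc
  have h1 : (M : ℂ) ^ d * ((∑ k, (F (p k) - F (q k)) : ℝ) : ℂ)
      = ∑ m ∈ Finset.univ.erase 0, ft Fc m * (starRingEnd ℂ) (S m) := by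
    rw [Finset.sum_erase]
    · simp only [hS, map_sum, map_sub, Finset.mul_sum, mul_sub]
      rw [Finset.sum_comm]
      simp only [Finset.sum_sub_distrib, ft_inv]
      push_cast
      simp only [← Finset.mul_sum, hFc, ← mul_sub]
    · simp [hS, chr_zero_left]
  have h2 : (M : ℝ) ^ d * |∑ k, (F (p k) - F (q k))|
      ≤ ∑ m ∈ Finset.univ.erase 0, ‖ft Fc m‖ * ‖S m‖ := by
    have := congrArg norm h1
    rw [norm_mul, Complex.norm_real, norm_pow, Complex.norm_natCast, Real.norm_eq_abs] at this
    rw [this]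
    refine (norm_sum_le _ _).trans (le_of_eq ?_)
    refine Finset.sum_congr rfl fun m _ => by rw [norm_mul, RCLike.norm_conj]
  have h3 : (∑ m ∈ Finset.univ.erase 0, ‖ft Fc m‖ * ‖S m‖) ^ 2
      ≤ (∑ m ∈ Finset.univ.erase 0, (16 / M ^ 2 * qf m) * ‖ft Fc m‖ ^ 2) *
        ∑ m ∈ Finset.univ.erase 0, ‖S m‖ ^ 2 * (M ^ 2 / 16 / qf m) := by
    apply Finset.sum_sq_le_sum_mul_sum_of_sq_le_mul
    · intro m hm
      have := qf_pos (Finset.ne_of_mem_erase hm)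
      positivity
    · intro m hm
      have := qf_pos (Finset.ne_of_mem_erase hm)
      positivity
    · intro m hm
      have := qf_pos (Finset.ne_of_mem_erase hm)
      apply le_of_eq
      field_simp
  have h4 : (∑ m ∈ Finset.univ.erase 0, (16 / M ^ 2 * qf m) * ‖ft Fc m‖ ^ 2)
      ≤ ((M : ℝ) ^ d) ^ 2 * (d * δ ^ 2) := by
    calc (∑ m ∈ Finset.univ.erase 0, (16 / M ^ 2 * qf m) * ‖ft Fc m‖ ^ 2)
        ≤ ∑ m, (16 / M ^ 2 * qf m) * ‖ft Fc m‖ ^ 2 := by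
          refine Finset.sum_le_sum_of_subset_of_nonneg (Finset.subset_univ _) fun m _ _ => ?_
          have : 0 ≤ qf m := Finset.sum_nonneg fun i _ => sq_nonneg _
          positivity
      _ ≤ ∑ m, ∑ i, ‖ft (fun g => Fc (g - Pi.single i 1) - Fc g) m‖ ^ 2 := by
          refine Finset.sum_le_sum fun m _ => ?_
          simp only [ft_diff, norm_mul, mul_pow, qf, Finset.mul_sum, Finset.sum_mul]
          refine Finset.sum_le_sum fun i _ => ?_
          gcongr
          exact stdAddChar_lower (m i)
      _ = ∑ i : Fin d, (M : ℝ) ^ d * ∑ g, ‖Fc (g - Pi.single i 1) - Fc g‖ ^ 2 := by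
          rw [Finset.sum_comm]
          simp only [ft_parseval]
      _ ≤ ∑ i : Fin d, (M : ℝ) ^ d * ∑ g : Fin d → ZMod M, δ ^ 2 := by
          gcongr with i _ g _
          simp only [hFc]
          rw [← Complex.ofReal_sub, Complex.norm_real, Real.norm_eq_abs]
          exact hF g i
      _ = _ := by
          simp [Finset.card_univ, ZMod.card]
          ring
  have h5 : ((M : ℝ) ^ d) ^ 2 * (∑ k, (F (p k) - F (q k))) ^ 2 ≤
      ((M : ℝ) ^ d) ^ 2 * (d * δ ^ 2 * ∑ m ∈ Finset.univ.erase 0, ‖S m‖ ^ 2 * (M ^ 2 / 16 / qf m)) := by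
    calc _ = ((M : ℝ) ^ d * |∑ k, (F (p k) - F (q k))|) ^ 2 := by rw [mul_pow, sq_abs]
      _ ≤ (∑ m ∈ Finset.univ.erase 0, ‖ft Fc m‖ * ‖S m‖) ^ 2 := by gcongr
      _ ≤ _ := h3
      _ ≤ (((M : ℝ) ^ d) ^ 2 * (d * δ ^ 2)) * _ := by
          refine mul_le_mul_of_nonneg_right h4 ?_
          refine Finset.sum_nonneg fun m hm => ?_
          have := qf_pos (Finset.ne_of_mem_erase hm)
          positivity
      _ = _ := by ring
  exact le_of_mul_le_mul_left h5 (by positivity)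

/-- Discretisation. -/
def disc {d : ℕ} (N : ℕ) (x : Fin d → ℝ) : Fin d → ZMod (2 * N) :=
  fun i => ((⌊(N : ℝ) * x i⌋₊ : ℕ) : ZMod (2 * N))

lemma fold_diff {M : ℕ} [NeZero M] (a : ZMod M) :
    |((a - 1).valMinAbs.natAbs : ℝ) - (a.valMinAbs.natAbs : ℝ)| ≤ 1 := by
  have key : ∀ b c : ZMod M, c.valMinAbs.natAbs ≤ 1 →
      (b + c).valMinAbs.natAbs ≤ b.valMinAbs.natAbs + 1 := by
    intro b c hc
    have := ZMod.natAbs_valMinAbs_add_le b c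
    omega
  have h1 : (1 : ZMod M).valMinAbs.natAbs ≤ 1 := by
    rw [ZMod.valMinAbs_natAbs_eq_min, ]
    refine (min_le_left _ _).trans ?_
    rw [ZMod.val_one_eq_one_mod]
    exact Nat.mod_le _ _
  have h2 := key (a - 1) 1 h1
  have h3 := key a (-1) (by rw [ZMod.natAbs_valMinAbs_neg]; exact h1)
  rw [sub_add_cancel] at h2
  rw [← sub_eq_add_neg] at h3
  have h2' : (a.valMinAbs.natAbs : ℝ) ≤ (a - 1).valMinAbs.natAbs + 1 := by exact_mod_cast h2
  have h3' : ((a - 1).valMinAbs.natAbs : ℝ) ≤ a.valMinAbs.natAbs + 1 := by exact_mod_cast h3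
  rw [abs_le]; constructor <;> linarith

lemma det_bound {d n N : ℕ} [NeZero N] (hn : 0 < n) (x y : Fin n → Fin d → ℝ)
    (hx : ∀ k i, x k i ∈ Set.Icc (0 : ℝ) 1) (hy : ∀ k i, y k i ∈ Set.Icc (0 : ℝ) 1)
    (t : ℝ) (ht : 0 < t)
    (f : (Fin d → ℝ) → ℝ) (hf : ∀ u v, |f u - f v| ≤ euclidDist u v) :
    (∑ k, (f (x k) - f (y k))) / n ≤ 2 * √d / N + t / 2 +
      (d / (8 * t * n ^ 2)) * ∑ m ∈ (Finset.univ.erase 0 : Finset (Fin d → ZMod (2 * N))),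
      ‖∑ k, (chr m (disc N (x k)) - chr m (disc N (y k)))‖ ^ 2 / qf m := by
  classical
  have hn' : (0 : ℝ) < n := by exact_mod_cast hn
  have hN : (0 : ℝ) < N := by exact_mod_cast Nat.pos_of_ne_zero (NeZero.ne N)
  let r : (Fin d → ZMod (2 * N)) → (Fin d → ℝ) := fun g i => ((g i).valMinAbs.natAbs : ℝ) / N
  let F : (Fin d → ZMod (2 * N)) → ℝ := fun g => f (r g)
  have hF : ∀ g i, |F (g - Pi.single i 1) - F g| ≤ 1 / N := by
    intro g i
    refine (hf _ _).trans ?_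
    unfold euclidDist
    rw [Finset.sum_eq_single i]
    · rw [Real.sqrt_sq_eq_abs]
      simp only [r, Pi.sub_apply, Pi.single_eq_same]
      rw [← sub_div, abs_div, abs_of_pos hN]
      gcongr
      exact fold_diff (g i)
    · intro j _ hj
      simp [r, hj]
    · simp
  have hr : ∀ u : Fin d → ℝ, (∀ i, u i ∈ Set.Icc (0 : ℝ) 1) → |f u - F (disc N u)| ≤ √d / N := by
    intro u hu
    refine (hf _ _).trans ?_
    unfold euclidDist
    rw [Real.sqrt_le_left (by positivity), div_pow, Real.sq_sqrt (by positivity)]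
    calc ∑ i, (u i - r (disc N u) i) ^ 2 ≤ ∑ i : Fin d, (1 / (N : ℝ)) ^ 2 := by
          refine Finset.sum_le_sum fun i _ => ?_
          have h0 : 0 ≤ (N : ℝ) * u i := mul_nonneg hN.le (hu i).1
          have h1 : ⌊(N : ℝ) * u i⌋₊ ≤ (2 * N) / 2 := by
            rw [Nat.mul_div_cancel_left _ (by norm_num)]
            apply Nat.floor_le_of_le
            have := (hu i).2
            nlinarith
          have h2 : r (disc N u) i = (⌊(N : ℝ) * u i⌋₊ : ℝ) / N := by
            simp only [r, disc]
            rw [ZMod.valMinAbs_natCast_of_le_half h1, Int.natAbs_natCast]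
          rw [h2]
          have h3 := Nat.floor_le h0
          have h4 := Nat.lt_floor_add_one ((N : ℝ) * u i)
          have h5 : u i - (⌊(N : ℝ) * u i⌋₊ : ℝ) / N = (N * u i - ⌊(N : ℝ) * u i⌋₊) / N := by
            field_simp
          rw [h5]
          have : 0 ≤ (N * u i - ⌊(N : ℝ) * u i⌋₊) := by linarith
          gcongr
          linarith
      _ = _ := by simp; ring
  have hfb := fourier_bound F (1 / N) hF (fun k => disc N (x k)) (fun k => disc N (y k))
  set T := ∑ k, (F (disc N (x k)) - F (disc N (y k))) with hT
  have e1 : (∑ k, (f (x k) - f (y k))) ≤ T + n * (2 * √d / N) := by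
    have : (∑ k, (f (x k) - f (y k))) ≤
        ∑ k : Fin n, ((F (disc N (x k)) - F (disc N (y k))) + 2 * √d / N) := by
      refine Finset.sum_le_sum fun k _ => ?_
      have h1 := (abs_le.1 (hr _ (hx k))).2
      have h2 := (abs_le.1 (hr _ (hy k))).1
      rw [mul_div_assoc]
      linarith
    rw [Finset.sum_add_distrib, Finset.sum_const, Finset.card_univ, Fintype.card_fin,
      nsmul_eq_mul] at this
    exact this
  set Q := ∑ m ∈ (Finset.univ.erase 0 : Finset (Fin d → ZMod (2 * N))),
      ‖∑ k, (chr m (disc N (x k)) - chr m (disc N (y k)))‖ ^ 2 / qf m with hQ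
  have e2 : T ^ 2 ≤ d / 4 * Q := by
    refine hfb.trans (le_of_eq ?_)
    rw [hQ, Finset.mul_sum, Finset.mul_sum]
    refine Finset.sum_congr rfl fun m hm => ?_
    have := qf_pos (Finset.ne_of_mem_erase hm)
    push_cast
    field_simp
    ring
  have e3 : T / n ≤ t / 2 + (d / (8 * t * n ^ 2)) * Q := by
    have h1 : (T / n) ≤ t / 2 + (T / n) ^ 2 / (2 * t) := by
      have : t / 2 + (T / n) ^ 2 / (2 * t) - T / n = (t - T / n) ^ 2 / (2 * t) := by
        field_simp
        ring
      have h2 : 0 ≤ (t - T / n) ^ 2 / (2 * t) := by positivity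
      linarith
    refine h1.trans ?_
    have h3 : (T / n) ^ 2 / (2 * t) = T ^ 2 / (2 * t * n ^ 2) := by field_simp
    have h4 : (d / (8 * t * n ^ 2)) * Q = (d / 4 * Q) / (2 * t * n ^ 2) := by
      field_simp; ring
    rw [h3, h4]
    gcongr
  calc _ ≤ (T + n * (2 * √d / N)) / n := by gcongr
    _ = T / n + 2 * √d / N := by field_simp
    _ ≤ _ := by linarith

lemma measurable_chr_disc {d N : ℕ} [NeZero N] (m : Fin d → ZMod (2 * N)) :
    Measurable (fun x : Fin d → ℝ => chr m (disc N x)) := by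
  let k : (Fin d → ℝ) → (Fin d → ℕ) := fun x i => ⌊(N : ℝ) * x i⌋₊
  have hk : Measurable k := by
    refine measurable_pi_lambda _ fun i => ?_
    exact Nat.measurable_floor.comp ((measurable_pi_apply i).const_mul _)
  have h2 : Measurable (fun j : Fin d → ℕ => chr m (fun i => ((j i : ℕ) : ZMod (2 * N)))) :=
    measurable_of_countable _
  exact h2.comp hk

lemma real_second_moment {d n : ℕ} {Ω : Type} [MeasurableSpace Ω] (P : Measure Ω)
    [IsProbabilityMeasure P] (X Y : Fin n → Ω → (Fin d → ℝ))
    (hX : ∀ k, Measurable (X k)) (hY : ∀ k, Measurable (Y k))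
    (hind : ∀ j k, j ≠ k →
          IndepFun (fun ω => (X j ω, Y j ω)) (fun ω => (X k ω, Y k ω)) P)
    (hid : ∀ k, P.map (X k) = P.map (Y k))
    (φ : (Fin d → ℝ) → ℝ) (hφ : Measurable φ) (hb : ∀ x, |φ x| ≤ 1) :
    Integrable (fun ω => (∑ k, (φ (X k ω) - φ (Y k ω))) ^ 2) P ∧
    ∫ ω, (∑ k, (φ (X k ω) - φ (Y k ω))) ^ 2 ∂P ≤ 4 * n := by
  let Z : Fin n → Ω → ℝ := fun k ω => φ (X k ω) - φ (Y k ω)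
  have hZm : ∀ k, Measurable (Z k) := fun k => (hφ.comp (hX k)).sub (hφ.comp (hY k))
  have hZb : ∀ k ω, |Z k ω| ≤ 2 := by
    intro k ω
    have h1 := abs_le.1 (hb (X k ω))
    have h2 := abs_le.1 (hb (Y k ω))
    rw [abs_le]; constructor <;> simp only [Z] <;> linarith
  have hZL : ∀ k, MemLp (Z k) 2 P := fun k =>
    MemLp.of_bound (hZm k).aestronglyMeasurable 2 (ae_of_all _ fun ω => by
      rw [Real.norm_eq_abs]; exact hZb k ω)
  have hint : ∀ V : Ω → (Fin d → ℝ), Measurable V → Integrable (fun ω => φ (V ω)) P := by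
    intro V hV
    refine Integrable.of_bound (hφ.comp hV).aestronglyMeasurable 1 (ae_of_all _ fun ω => by
      rw [Real.norm_eq_abs]; exact hb _)
  have hZ0 : ∀ k, ∫ ω, Z k ω ∂P = 0 := by
    intro k
    simp only [Z]
    rw [integral_sub (hint _ (hX k)) (hint _ (hY k))]
    rw [← integral_map (hX k).aemeasurable hφ.aestronglyMeasurable,
      ← integral_map (hY k).aemeasurable hφ.aestronglyMeasurable, hid k, sub_self]
  have hSL : MemLp (∑ k, Z k) 2 P := memLp_finsetSum' _ fun k _ => hZL k
  have hSe : ∀ ω, (∑ k, Z k) ω = ∑ k, (φ (X k ω) - φ (Y k ω)) := by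
    intro ω; simp [Z]
  have hS0 : ∫ ω, (∑ k, Z k) ω ∂P = 0 := by
    simp only [Finset.sum_apply]
    rw [integral_finsetSum _ fun k _ => (hZL k).integrable (by norm_num)]
    simp [hZ0]
  have hvar : Var[∑ k, Z k; P] = ∑ k, Var[Z k; P] := by
    apply IndepFun.variance_sum
    · exact fun k _ => hZL k
    · intro j _ k _ hjk
      have := (hind j k hjk).comp (φ := fun p : (Fin d → ℝ) × (Fin d → ℝ) => φ p.1 - φ p.2)
        (ψ := fun p : (Fin d → ℝ) × (Fin d → ℝ) => φ p.1 - φ p.2)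
        ((hφ.comp measurable_fst).sub (hφ.comp measurable_snd))
        ((hφ.comp measurable_fst).sub (hφ.comp measurable_snd))
      exact this
  have hle : ∀ k, Var[Z k; P] ≤ 4 := by
    intro k
    rw [variance_of_integral_eq_zero (hZm k).aemeasurable (hZ0 k)]
    calc ∫ ω, (Z k ω) ^ 2 ∂P ≤ ∫ ω, (4 : ℝ) ∂P := by
          refine integral_mono (hZL k).integrable_sq (integrable_const _) fun ω => ?_
          have := abs_le.1 (hZb k ω)
          show Z k ω ^ 2 ≤ 4
          nlinarith
      _ = 4 := by simp
  rw [variance_of_integral_eq_zero hSL.aemeasurable hS0] at hvar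
  have hsq := hSL.integrable_sq
  simp only [hSe] at hvar hsq
  refine ⟨hsq, ?_⟩
  rw [hvar]
  calc ∑ k, Var[Z k; P] ≤ ∑ k : Fin n, (4 : ℝ) := Finset.sum_le_sum fun k _ => hle k
    _ = 4 * n := by simp [mul_comm]

lemma second_moment {d n N : ℕ} [NeZero N] {Ω : Type} [MeasurableSpace Ω] (P : Measure Ω)
    [IsProbabilityMeasure P] (X Y : Fin n → Ω → (Fin d → ℝ))
    (hX : ∀ k, Measurable (X k)) (hY : ∀ k, Measurable (Y k))
    (hind : ∀ j k, j ≠ k →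
          IndepFun (fun ω => (X j ω, Y j ω)) (fun ω => (X k ω, Y k ω)) P)
    (hid : ∀ k, P.map (X k) = P.map (Y k)) (m : Fin d → ZMod (2 * N)) :
    Integrable (fun ω => ‖∑ k, (chr m (disc N (X k ω)) - chr m (disc N (Y k ω)))‖ ^ 2) P ∧
    ∫ ω, ‖∑ k, (chr m (disc N (X k ω)) - chr m (disc N (Y k ω)))‖ ^ 2 ∂P ≤ 8 * n := by
  have hm := measurable_chr_disc (N := N) m
  obtain ⟨i1, b1⟩ := real_second_moment P X Y hX hY hind hid (fun x => (chr m (disc N x)).re)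
    (Complex.measurable_re.comp hm) (fun x => (Complex.abs_re_le_norm _).trans (chr_norm _ _).le)
  obtain ⟨i2, b2⟩ := real_second_moment P X Y hX hY hind hid (fun x => (chr m (disc N x)).im)
    (Complex.measurable_im.comp hm) (fun x => (Complex.abs_im_le_norm _).trans (chr_norm _ _).le)
  have he : (fun ω => ‖∑ k, (chr m (disc N (X k ω)) - chr m (disc N (Y k ω)))‖ ^ 2)
      = fun ω => (∑ k, ((chr m (disc N (X k ω))).re - (chr m (disc N (Y k ω))).re)) ^ 2
        + (∑ k, ((chr m (disc N (X k ω))).im - (chr m (disc N (Y k ω))).im)) ^ 2 := by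
    ext ω
    rw [Complex.sq_norm, Complex.normSq_apply]
    simp only [Complex.re_sum, Complex.im_sum, Complex.sub_re, Complex.sub_im]
    ring
  rw [he]
  refine ⟨i1.add i2, ?_⟩
  rw [integral_add i1 i2]
  linarith

lemma expect_bound {d n N : ℕ} [NeZero N] (hn : 0 < n) {Ω : Type} [MeasurableSpace Ω]
    (P : Measure Ω)
    [IsProbabilityMeasure P] (X Y : Fin n → Ω → (Fin d → ℝ))
    (hX : ∀ k, Measurable (X k)) (hY : ∀ k, Measurable (Y k))
    (hX1 : ∀ k ω i, X k ω i ∈ Set.Icc (0 : ℝ) 1)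
    (hY1 : ∀ k ω i, Y k ω i ∈ Set.Icc (0 : ℝ) 1)
    (hind : ∀ j k, j ≠ k →
          IndepFun (fun ω => (X j ω, Y j ω)) (fun ω => (X k ω, Y k ω)) P)
    (hid : ∀ k, P.map (X k) = P.map (Y k)) (K : ℝ) (hK : 0 < K)
    (hsum : ∑ m ∈ (Finset.univ.erase 0 : Finset (Fin d → ZMod (2 * N))), 1 / qf m ≤ K) :
    ∫⁻ ω, W1 (empMeasure X ω) (empMeasure Y ω) ∂P
      ≤ ENNReal.ofReal (2 * √d / N + (1 + d) * √(K / n)) := by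
  have hn' : (0 : ℝ) < n := by exact_mod_cast hn
  set t : ℝ := √(K / n) with ht
  have ht0 : 0 < t := Real.sqrt_pos.2 (by positivity)
  have ht2 : t ^ 2 = K / n := Real.sq_sqrt (by positivity)
  let S : (Fin d → ZMod (2 * N)) → Ω → ℝ := fun m ω =>
    ‖∑ k, (chr m (disc N (X k ω)) - chr m (disc N (Y k ω)))‖ ^ 2
  have hS := fun m => second_moment (N := N) P X Y hX hY hind hid m
  let Q : Ω → ℝ := fun ω => 2 * √d / N + t / 2 +
      (d / (8 * t * n ^ 2)) * ∑ m ∈ Finset.univ.erase 0, S m ω / qf m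
  have hsi : Integrable (fun ω => ∑ m ∈ Finset.univ.erase 0, S m ω / qf m) P :=
    integrable_finsetSum _ fun m _ => (hS m).1.div_const _
  have hQi : Integrable Q P := (integrable_const _).add (hsi.const_mul _)
  have hQ0 : ∀ ω, 0 ≤ Q ω := by
    intro ω
    have : 0 ≤ ∑ m ∈ Finset.univ.erase 0, S m ω / qf m := by
      refine Finset.sum_nonneg fun m hm => ?_
      have := qf_pos (Finset.ne_of_mem_erase hm)
      simp only [S]
      positivity
    simp only [Q]
    positivity
  calc ∫⁻ ω, W1 (empMeasure X ω) (empMeasure Y ω) ∂P ≤ ∫⁻ ω, ENNReal.ofReal (Q ω) ∂P := by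
        refine lintegral_mono fun ω => ?_
        exact W1_le_of_dual hn (fun k => X k ω) (fun k => Y k ω) (Q ω) fun f hf =>
          det_bound hn _ _ (fun k i => hX1 k ω i) (fun k i => hY1 k ω i) t ht0 f hf
    _ = ENNReal.ofReal (∫ ω, Q ω ∂P) :=
        (ofReal_integral_eq_lintegral_ofReal hQi (ae_of_all _ hQ0)).symm
    _ ≤ _ := by
        apply ENNReal.ofReal_le_ofReal
        have h1 : ∫ ω, Q ω ∂P = 2 * √d / N + t / 2 +
            (d / (8 * t * n ^ 2)) * ∑ m ∈ Finset.univ.erase 0, (∫ ω, S m ω ∂P) / qf m := by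
          simp only [Q]
          rw [integral_add (integrable_const _) (hsi.const_mul _), integral_const_mul,
            integral_finsetSum _ fun m _ => (hS m).1.div_const _]
          simp only [integral_div, integral_const, probReal_univ, one_smul, S]
        have h2 : ∑ m ∈ Finset.univ.erase 0, (∫ ω, S m ω ∂P) / qf m ≤ 8 * n * K := by
          calc _ ≤ ∑ m ∈ (Finset.univ.erase 0 : Finset (Fin d → ZMod (2 * N))),
                8 * n * (1 / qf m) := by
                refine Finset.sum_le_sum fun m hm => ?_
                have := qf_pos (Finset.ne_of_mem_erase hm)
                rw [mul_one_div]
                gcongr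
                exact (hS m).2
            _ = 8 * n * ∑ m ∈ (Finset.univ.erase 0 : Finset (Fin d → ZMod (2 * N))),
                 (1 / qf m) := by rw [Finset.mul_sum]
            _ ≤ _ := by gcongr
        rw [h1]
        have h3 : (d / (8 * t * n ^ 2)) * (8 * n * K) = d * t := by
          have : K = t ^ 2 * n := by rw [ht2]; field_simp
          rw [this]; field_simp
        have h4 : (d / (8 * t * n ^ 2)) * ∑ m ∈ Finset.univ.erase 0, (∫ ω, S m ω ∂P) / qf m
            ≤ d * t := by
          rw [← h3]; gcongr
        nlinarith

lemma sum_fold_le {N : ℕ} [NeZero N] (h : ℕ → ℝ) (hh : ∀ r, 0 ≤ h r) :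
    ∑ a ∈ (Finset.univ.erase 0 : Finset (ZMod (2 * N))), h a.valMinAbs.natAbs
      ≤ 2 * ∑ r ∈ Finset.Icc 1 N, h r := by
  classical
  rw [← Finset.sum_fiberwise_of_maps_to (s := Finset.univ.erase 0) (t := Finset.Icc 1 N)
    (g := fun a : ZMod (2 * N) => a.valMinAbs.natAbs)]
  · rw [Finset.mul_sum]
    refine Finset.sum_le_sum fun r _ => ?_
    have hc : ((Finset.univ.erase 0 : Finset (ZMod (2 * N))).filter
        (fun a => a.valMinAbs.natAbs = r)).card ≤ 2 := by
      calc _ ≤ ({(r : ℤ), -(r : ℤ)} : Finset ℤ).card := by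
            apply Finset.card_le_card_of_injOn ZMod.valMinAbs
            · intro a ha
              simp only [Finset.coe_filter, Set.mem_ofPred_eq] at ha
              have := ha.2
              simp only [Finset.coe_insert, Finset.coe_singleton, Set.mem_insert_iff,
                Set.mem_singleton_iff]
              omega
            · exact ZMod.injective_valMinAbs.injOn
        _ ≤ 2 := Finset.card_le_two
    calc _ = ∑ a ∈ ((Finset.univ.erase 0 : Finset (ZMod (2 * N))).filter
        (fun a => a.valMinAbs.natAbs = r)), h r := by
          refine Finset.sum_congr rfl fun a ha => ?_
          rw [(Finset.mem_filter.1 ha).2]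
      _ = _ := by rw [Finset.sum_const, nsmul_eq_mul]
      _ ≤ 2 * h r := by
          gcongr
          · exact hh r
          · exact_mod_cast hc
  · intro a ha
    have h1 : a ≠ 0 := Finset.ne_of_mem_erase ha
    have h2 : a.valMinAbs ≠ 0 := by simpa [ZMod.valMinAbs_eq_zero] using h1
    have h3 := ZMod.natAbs_valMinAbs_le a
    rw [Finset.mem_Icc]
    omega

lemma freq_sum {d N : ℕ} [NeZero N] (hd : 1 ≤ d) :
    ∑ m ∈ (Finset.univ.erase 0 : Finset (Fin d → ZMod (2 * N))), 1 / qf m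
      ≤ 2 * d * 3 ^ (d - 1) * ∑ r ∈ Finset.Icc 1 N, (r : ℝ) ^ (d - 1) / (r : ℝ) ^ 2 := by
  classical
  let ν : ZMod (2 * N) → ℕ := fun a => a.valMinAbs.natAbs
  have hν0 : ∀ a, a ≠ 0 → 1 ≤ ν a := by
    intro a ha
    have h2 : a.valMinAbs ≠ 0 := by simpa [ZMod.valMinAbs_eq_zero] using ha
    simp only [ν]
    omega
  have hνsq : ∀ a : ZMod (2 * N), (a.valMinAbs : ℝ) ^ 2 = (ν a : ℝ) ^ 2 := by
    intro a
    simp only [ν]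
    rw [Nat.cast_natAbs, Int.cast_abs, sq_abs]
  let U : Fin d → ZMod (2 * N) → Finset (Fin d → ZMod (2 * N)) := fun i a =>
    Fintype.piFinset (fun j => if j = i then {a} else Finset.univ.filter (fun b => ν b ≤ ν a))
  have hc : ∀ a : ZMod (2 * N), a ≠ 0 → (Finset.univ.filter (fun b => ν b ≤ ν a)).card ≤ 3 * ν a := by
    intro a ha
    have := hν0 a ha
    calc _ ≤ (Finset.Icc (-(ν a : ℤ)) (ν a)).card := by
          apply Finset.card_le_card_of_injOn ZMod.valMinAbs
          · intro b hb
            have hb' : b.valMinAbs.natAbs ≤ ν a := by simpa [ν] using hb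
            simp only [Finset.coe_Icc, Set.mem_Icc]
            omega
          · exact ZMod.injective_valMinAbs.injOn
      _ ≤ 3 * ν a := by rw [Int.card_Icc]; omega
  have hU : ∀ i a, a ≠ 0 → ((U i a).card : ℝ) ≤ (3 * ν a) ^ (d - 1) := by
    intro i a ha
    have : (U i a).card ≤ (3 * ν a) ^ (d - 1) := by
      simp only [U, Fintype.card_piFinset]
      rw [← Finset.mul_prod_erase _ _ (Finset.mem_univ i)]
      simp only [if_true, Finset.card_singleton, one_mul]
      calc _ ≤ ∏ j ∈ Finset.univ.erase i, (3 * ν a) := by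
            refine Finset.prod_le_prod' fun j hj => ?_
            rw [if_neg (Finset.ne_of_mem_erase hj)]
            exact hc a ha
        _ = _ := by simp
    exact_mod_cast this
  have hpt : ∀ m ∈ (Finset.univ.erase 0 : Finset (Fin d → ZMod (2 * N))), 1 / qf m ≤
      ∑ i : Fin d, ∑ a ∈ Finset.univ.erase 0, if m ∈ U i a then 1 / (ν a : ℝ) ^ 2 else 0 := by
    intro m hm
    have hm0 := Finset.ne_of_mem_erase hm
    have : Nonempty (Fin d) := ⟨⟨0, hd⟩⟩
    obtain ⟨i, -, hi⟩ := Finset.exists_max_image Finset.univ (fun i => ν (m i)) Finset.univ_nonempty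
    have hmi : m i ≠ 0 := by
      intro h0
      apply hm0
      funext j
      by_contra hj
      have h1 := hν0 _ hj
      have h2 := hi j (Finset.mem_univ j)
      have h3 : ν (m i) = 0 := by rw [h0]; simp [ν]
      omega
    have hmem : m ∈ U i (m i) := by
      simp only [U, Fintype.mem_piFinset]
      intro j
      split_ifs with h
      · simp [h]
      · simpa using hi j (Finset.mem_univ j)
    have hp : (0 : ℝ) < ν (m i) := by exact_mod_cast hν0 _ hmi
    calc 1 / qf m ≤ 1 / (ν (m i) : ℝ) ^ 2 := by
          apply one_div_le_one_div_of_le (by positivity)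
          rw [← hνsq]
          exact Finset.single_le_sum (f := fun i => ((m i).valMinAbs : ℝ) ^ 2)
            (fun j _ => sq_nonneg _) (Finset.mem_univ i)
      _ = if m ∈ U i (m i) then 1 / (ν (m i) : ℝ) ^ 2 else 0 := by rw [if_pos hmem]
      _ ≤ ∑ a ∈ Finset.univ.erase 0, if m ∈ U i a then 1 / (ν a : ℝ) ^ 2 else 0 := by
          refine Finset.single_le_sum (f := fun a => if m ∈ U i a then 1 / (ν a : ℝ) ^ 2 else 0)
            (fun a _ => ?_) (Finset.mem_erase.2 ⟨hmi, Finset.mem_univ _⟩)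
          split_ifs <;> positivity
      _ ≤ _ := by
          refine Finset.single_le_sum (f := fun i => ∑ a ∈ Finset.univ.erase 0,
            if m ∈ U i a then 1 / (ν a : ℝ) ^ 2 else 0)
            (fun i _ => Finset.sum_nonneg fun a _ => ?_) (Finset.mem_univ i)
          split_ifs <;> positivity
  calc _ ≤ ∑ m ∈ (Finset.univ.erase 0 : Finset (Fin d → ZMod (2 * N))),
      ∑ i : Fin d, ∑ a ∈ Finset.univ.erase 0, (if m ∈ U i a then 1 / (ν a : ℝ) ^ 2 else 0) :=
        Finset.sum_le_sum hpt
    _ ≤ ∑ m : (Fin d → ZMod (2 * N)),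
      ∑ i : Fin d, ∑ a ∈ Finset.univ.erase 0, (if m ∈ U i a then 1 / (ν a : ℝ) ^ 2 else 0) := by
        refine Finset.sum_le_sum_of_subset_of_nonneg (Finset.subset_univ _) fun m _ _ => ?_
        refine Finset.sum_nonneg fun i _ => Finset.sum_nonneg fun a _ => ?_
        split_ifs <;> positivity
    _ = ∑ i : Fin d, ∑ a ∈ Finset.univ.erase 0, ∑ m : (Fin d → ZMod (2 * N)),
        (if m ∈ U i a then 1 / (ν a : ℝ) ^ 2 else 0) := by
        rw [Finset.sum_comm]
        refine Finset.sum_congr rfl fun i _ => by rw [Finset.sum_comm]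
    _ = ∑ i : Fin d, ∑ a ∈ Finset.univ.erase 0, (U i a).card * (1 / (ν a : ℝ) ^ 2) := by
        refine Finset.sum_congr rfl fun i _ => Finset.sum_congr rfl fun a _ => ?_
        rw [← Finset.sum_filter, Finset.sum_const, nsmul_eq_mul]
        congr 3
        ext m; simp
    _ ≤ ∑ i : Fin d, ∑ a ∈ (Finset.univ.erase 0 : Finset (ZMod (2 * N))),
        (3 ^ (d - 1) * ((ν a : ℝ) ^ (d - 1) / (ν a : ℝ) ^ 2)) := by
        refine Finset.sum_le_sum fun i _ => Finset.sum_le_sum fun a ha => ?_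
        have := hU i a (Finset.ne_of_mem_erase ha)
        calc _ ≤ (3 * (ν a : ℝ)) ^ (d - 1) * (1 / (ν a : ℝ) ^ 2) := by gcongr
          _ = _ := by rw [mul_pow]; ring
    _ = d * (3 ^ (d - 1) * ∑ a ∈ (Finset.univ.erase 0 : Finset (ZMod (2 * N))),
        ((ν a : ℝ) ^ (d - 1) / (ν a : ℝ) ^ 2)) := by
        rw [Finset.sum_const, Finset.card_univ, Fintype.card_fin, nsmul_eq_mul, ← Finset.mul_sum]
    _ ≤ d * (3 ^ (d - 1) * (2 * ∑ r ∈ Finset.Icc 1 N, (r : ℝ) ^ (d - 1) / (r : ℝ) ^ 2)) := by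
        gcongr
        exact sum_fold_le (fun r => (r : ℝ) ^ (d - 1) / (r : ℝ) ^ 2) (fun r => by positivity)
    _ = _ := by ring

lemma sum_one (N : ℕ) : ∑ r ∈ Finset.Icc 1 N, (r : ℝ) ^ (1 - 1) / (r : ℝ) ^ 2 ≤ 2 := by
  rcases Nat.eq_zero_or_pos N with rfl | hN
  · simp
  have : ∑ r ∈ Finset.Icc 1 N, (r : ℝ) ^ (1 - 1) / (r : ℝ) ^ 2 ≤ 2 - 1 / N := by
    induction N, hN using Nat.le_induction with
    | base => norm_num
    | succ k hk ih =>
      rw [Finset.sum_Icc_succ_top (by omega)]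
      have hk' : (0 : ℝ) < k := by exact_mod_cast hk
      have : ((k + 1 : ℕ) : ℝ) ^ (1 - 1) / ((k + 1 : ℕ) : ℝ) ^ 2 ≤ 1 / k - 1 / ((k + 1 : ℕ) : ℝ) := by
        push_cast
        rw [div_sub_div _ _ (by positivity) (by positivity), div_le_div_iff₀ (by positivity) (by positivity)]
        simp only [pow_zero]
        nlinarith
      linarith
  have h2 : (0 : ℝ) ≤ 1 / N := by positivity
  linarith

lemma sum_two (N : ℕ) : ∑ r ∈ Finset.Icc 1 N, (r : ℝ) ^ (2 - 1) / (r : ℝ) ^ 2 ≤ 1 + Real.log N := by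
  have h := harmonic_le_one_add_log N
  rw [harmonic_eq_sum_Icc] at h
  push_cast at h
  refine le_trans (le_of_eq ?_) h
  refine Finset.sum_congr rfl fun r hr => ?_
  have : (0 : ℝ) < r := by exact_mod_cast (Finset.mem_Icc.1 hr).1
  simp only [Nat.reduceSub]
  field_simp

lemma sum_three (d N : ℕ) (hd : 3 ≤ d) :
    ∑ r ∈ Finset.Icc 1 N, (r : ℝ) ^ (d - 1) / (r : ℝ) ^ 2 ≤ (N : ℝ) ^ (d - 2) := by
  calc _ ≤ ∑ r ∈ Finset.Icc 1 N, (N : ℝ) ^ (d - 3) := by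
        refine Finset.sum_le_sum fun r hr => ?_
        have hr' := Finset.mem_Icc.1 hr
        have : (0 : ℝ) < r := by exact_mod_cast hr'.1
        have h2 : (r : ℝ) ≤ N := by exact_mod_cast hr'.2
        rw [show d - 1 = (d - 3) + 2 by omega, pow_add, mul_div_cancel_right₀ _ (by positivity)]
        gcongr
    _ = N * (N : ℝ) ^ (d - 3) := by simp
    _ = _ := by rw [show d - 2 = (d - 3) + 1 by omega, pow_succ]; ring

/-- Theorem 3: rates of convergence for the expected Kantorovich distance between
the two empirical measures of pairwise independent, coordinatewise equidistributed
samples in `[0,1]^d`. -/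
theorem expected_W1_rate (d : ℕ) :
    ∃ C : ℝ, 0 < C ∧
      ∀ (n : ℕ), 2 ≤ n →
      ∀ (Ω : Type) (_ : MeasurableSpace Ω) (P : Measure Ω), IsProbabilityMeasure P →
      ∀ (X Y : Fin n → Ω → (Fin d → ℝ)),
        (∀ k, Measurable (X k)) → (∀ k, Measurable (Y k)) →
        (∀ k ω i, X k ω i ∈ Set.Icc (0 : ℝ) 1) →
        (∀ k ω i, Y k ω i ∈ Set.Icc (0 : ℝ) 1) →
        (∀ j k, j ≠ k →
          IndepFun (fun ω => (X j ω, Y j ω)) (fun ω => (X k ω, Y k ω)) P) →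
        (∀ k, P.map (X k) = P.map (Y k)) →
        (d = 1 →
          ∫⁻ ω, W1 (empMeasure X ω) (empMeasure Y ω) ∂P
            ≤ ENNReal.ofReal (C / Real.sqrt n)) ∧
        (d = 2 →
          ∫⁻ ω, W1 (empMeasure X ω) (empMeasure Y ω) ∂P
            ≤ ENNReal.ofReal (C * Real.sqrt (Real.log n / n))) ∧
        (3 ≤ d →
          ∫⁻ ω, W1 (empMeasure X ω) (empMeasure Y ω) ∂P
            ≤ ENNReal.ofReal (C / (n : ℝ) ^ (1 / d : ℝ))) := by
  let K0 : ℝ := 2 * d * 3 ^ (d - 1) * 2 ^ (d - 2)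
  have hK0 : 0 ≤ K0 := by positivity
  refine ⟨21 + 2 * √d + (1 + d) * √K0, by positivity, ?_⟩
  intro n hn Ω _ P _ X Y hX hY hX1 hY1 hind hid
  have hn0 : 0 < n := by omega
  have hn' : (0 : ℝ) < n := by exact_mod_cast hn0
  have hn2 : (2 : ℝ) ≤ n := by exact_mod_cast hn
  have hne : NeZero n := ⟨hn0.ne'⟩
  refine ⟨?_, ?_, ?_⟩
  · rintro rfl
    have hs : ∑ m ∈ (Finset.univ.erase 0 : Finset (Fin 1 → ZMod (2 * n))), 1 / qf m ≤ 4 := by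
      refine (freq_sum le_rfl).trans ?_
      have := sum_one n
      simp only [Nat.sub_self, pow_zero, Nat.cast_one] at this ⊢
      linarith
    refine (expect_bound (N := n) hn0 P X Y hX hY hX1 hY1 hind hid 4 (by norm_num) hs).trans ?_
    apply ENNReal.ofReal_le_ofReal
    have hsq : 0 < √(n : ℝ) := Real.sqrt_pos.2 hn'
    have h1 : 1 / (n : ℝ) ≤ 1 / √(n : ℝ) := by
      apply one_div_le_one_div_of_le hsq
      rw [Real.sqrt_le_left hn'.le]
      nlinarith
    have h2 : √(4 / (n : ℝ)) = 2 * (1 / √(n : ℝ)) := by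
      rw [Real.sqrt_div (by norm_num), show (4 : ℝ) = 2 ^ 2 by norm_num,
        Real.sqrt_sq (by norm_num)]; ring
    have h3 : 0 ≤ 1 / √(n : ℝ) := by positivity
    have h4 := mul_nonneg (Real.sqrt_nonneg K0) h3
    rw [h2, div_eq_mul_one_div (2 * √((1 : ℕ) : ℝ)) (n : ℝ),
      div_eq_mul_one_div (21 + 2 * √((1 : ℕ) : ℝ) + (1 + ((1 : ℕ) : ℝ)) * √K0) (√(n : ℝ))]
    simp only [Nat.cast_one, Real.sqrt_one]
    clear_value K0
    generalize 1 / √(n : ℝ) = u at *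
    generalize √K0 = κ at *
    linarith
  · rintro rfl
    have hlog2 := Real.log_two_gt_d9
    have hlog : 1 / 2 ≤ Real.log n := by
      have := Real.log_le_log (by norm_num) hn2
      linarith
    have hs : ∑ m ∈ (Finset.univ.erase 0 : Finset (Fin 2 → ZMod (2 * n))), 1 / qf m
        ≤ 36 * Real.log n := by
      refine (freq_sum (by norm_num)).trans ?_
      have := sum_two n
      simp only [Nat.cast_ofNat, Nat.add_one_sub_one, pow_one] at this ⊢
      linarith
    refine (expect_bound (N := n) hn0 P X Y hX hY hX1 hY1 hind hid (36 * Real.log n)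
      (by linarith) hs).trans ?_
    apply ENNReal.ofReal_le_ofReal
    set s := √(Real.log n / n) with hs'
    have hs0 : 0 ≤ s := Real.sqrt_nonneg _
    have h1 : 1 / (n : ℝ) ≤ s := by
      apply Real.le_sqrt_of_sq_le
      rw [div_pow, div_le_div_iff₀ (by positivity) hn']
      nlinarith [mul_pos hn' hn']
    have h2 : √(36 * Real.log n / n) = 6 * s := by
      rw [mul_div_assoc, Real.sqrt_mul (by norm_num), show (36 : ℝ) = 6 ^ 2 by norm_num,
        Real.sqrt_sq (by norm_num)]
    rw [h2, div_eq_mul_one_div _ (n : ℝ)]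
    have h4 := Real.sqrt_nonneg K0
    have h5 := Real.sqrt_nonneg ((2 : ℕ) : ℝ)
    have h6 := mul_le_mul_of_nonneg_left h1 h5
    have h7 := mul_nonneg h4 hs0
    push_cast at h5 h6 ⊢
    clear_value K0 s
    generalize √K0 = κ at *
    generalize 1 / (n : ℝ) = u at *
    linarith
  · intro hd
    have hd0 : (0 : ℝ) < d := by exact_mod_cast (by omega : 0 < d)
    set s : ℝ := (n : ℝ) ^ (1 / d : ℝ) with hs'
    have hs1 : 1 ≤ s := Real.one_le_rpow (by linarith) (by positivity)
    have hs0 : 0 < s := by linarith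
    have hsd : s ^ d = n := by
      rw [hs', one_div]
      exact Real.rpow_inv_natCast_pow hn'.le (by omega)
    set N := ⌈s⌉₊ with hN
    have hN1 : s ≤ N := Nat.le_ceil s
    have hN2 : (N : ℝ) ≤ 2 * s := by
      have := Nat.ceil_lt_add_one hs0.le
      linarith
    have hN0 : 0 < N := Nat.ceil_pos.2 hs0
    have hNne : NeZero N := ⟨hN0.ne'⟩
    have hK0' : 0 < K0 := by positivity
    have hs : ∑ m ∈ (Finset.univ.erase 0 : Finset (Fin d → ZMod (2 * N))), 1 / qf m
        ≤ K0 * s ^ (d - 2) := by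
      refine (freq_sum (by omega)).trans ?_
      calc _ ≤ 2 * d * 3 ^ (d - 1) * (N : ℝ) ^ (d - 2) := by
            gcongr
            exact sum_three d N hd
        _ ≤ 2 * d * 3 ^ (d - 1) * (2 * s) ^ (d - 2) := by gcongr
        _ = _ := by simp only [K0]; rw [mul_pow]; ring
    refine (expect_bound (N := N) hn0 P X Y hX hY hX1 hY1 hind hid (K0 * s ^ (d - 2))
      (by positivity) hs).trans ?_
    apply ENNReal.ofReal_le_ofReal
    have h2 : √(K0 * s ^ (d - 2) / n) = √K0 / s := by
      have : K0 * s ^ (d - 2) / n = K0 / s ^ 2 := by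
        rw [← hsd]
        obtain ⟨e, rfl⟩ : ∃ e, d = e + 2 := ⟨d - 2, by omega⟩
        rw [Nat.add_sub_cancel, pow_add]
        field_simp
      rw [this, Real.sqrt_div hK0, Real.sqrt_sq hs0.le]
    rw [h2]
    calc 2 * √d / N + (1 + d) * (√K0 / s) ≤ 2 * √d / s + (1 + d) * (√K0 / s) := by gcongr
      _ = (0 + 2 * √d + (1 + d) * √K0) / s := by ring
      _ ≤ _ := by gcongr; norm_num
end
end

section
/- Let (Ω, 𝒜, ℙ) be a probability space and 𝒜₁, 𝒜₂ ⊂ 𝒜 sub-σ-algebras. If φ and ψ are complex-valued random variables, measurable with respect to 𝒜₁ and 𝒜₂ respectively, with |φ| ≤ 1 and |ψ| ≤ 1 everywhere, then |Cov(φ,ψ)| = |E((φ − E φ)(ψ̄ − E ψ̄))| ≤ 16·α(𝒜₁,𝒜₂). -/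
open MeasureTheory ProbabilityTheory

noncomputable section

/-- The Rosenblatt mixing coefficient `α(𝒜₁, 𝒜₂)` of two sub-σ-algebras. -/
def rosenblattAlpha {Ω : Type*} [MeasurableSpace Ω] (P : Measure Ω)
    (m1 m2 : MeasurableSpace Ω) : ℝ :=
  sSup {r | ∃ A B : Set Ω, MeasurableSet[m1] A ∧ MeasurableSet[m2] B ∧
    r = |(P (A ∩ B)).toReal - (P A).toReal * (P B).toReal|}

theorem step_aux {Ω : Type*} (m : MeasurableSpace Ω) [mΩ : MeasurableSpace Ω]
    (P : Measure Ω) [IsProbabilityMeasure P] (hm : m ≤ mΩ) (f h : Ω → ℝ) (hf : Measurable[m] f)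
    (hf1 : ∀ ω, |f ω| ≤ 1) (hh : Integrable h P) (h0 : ∫ ω, h ω ∂P = 0) :
    ∃ A, MeasurableSet[m] A ∧ |∫ ω, f ω * h ω ∂P| ≤ 2 * ∫ ω in A, h ω ∂P := by
  have hkm : StronglyMeasurable[m] (P[h|m]) := stronglyMeasurable_condExp
  have hki : Integrable (P[h|m]) P := integrable_condExp
  have hA : MeasurableSet[m] {ω | 0 ≤ (P[h|m]) ω} :=
    hkm.measurable measurableSet_Ici
  have hk0 : ∫ ω, (P[h|m]) ω ∂P = 0 := by rw [integral_condExp hm, h0]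
  have hfm : AEStronglyMeasurable f P := (hf.mono hm le_rfl).aestronglyMeasurable
  have hfh : Integrable (fun ω => f ω * h ω) P :=
    hh.bdd_mul hfm (Filter.Eventually.of_forall (fun ω => hf1 ω))
  have e1 : ∫ ω, f ω * h ω ∂P = ∫ ω, f ω * (P[h|m]) ω ∂P := by
    rw [← integral_condExp hm]
    exact integral_congr_ae
      (condExp_mul_of_stronglyMeasurable_left hf.stronglyMeasurable hfh hh)
  refine ⟨_, hA, ?_⟩
  rw [e1, ← setIntegral_condExp hm hh hA]
  have e2 : |∫ ω, f ω * (P[h|m]) ω ∂P| ≤ ∫ ω, |(P[h|m]) ω| ∂P := by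
    refine (abs_integral_le_integral_abs).trans ?_
    refine integral_mono_of_nonneg (Filter.Eventually.of_forall fun _ => abs_nonneg _) hki.abs
      (Filter.Eventually.of_forall fun ω => ?_)
    simp only [abs_mul]
    exact mul_le_of_le_one_left (abs_nonneg _) (hf1 ω)
  refine e2.trans (le_of_eq ?_)
  rw [← integral_indicator (hm _ hA), ← integral_const_mul]
  have e3 : ∫ ω, |(P[h|m]) ω| ∂P
      = ∫ ω, (2 * ({ω | 0 ≤ (P[h|m]) ω}.indicator (P[h|m]) ω) - (P[h|m]) ω) ∂P := by
    congr 1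
    ext ω
    by_cases hω : 0 ≤ (P[h|m]) ω
    · rw [Set.indicator_of_mem (by exact hω), abs_of_nonneg hω]; ring
    · rw [Set.indicator_of_notMem (by exact hω), abs_of_neg (not_le.1 hω)]; ring
  rw [e3, integral_sub ((hki.indicator (hm _ hA)).const_mul 2) hki, hk0, sub_zero]

theorem conj_aux {Ω : Type*} [mΩ : MeasurableSpace Ω] (P : Measure Ω)
    (ψ : Ω → ℂ) (hψi : Integrable ψ P) :
    ∫ x, starRingEnd ℂ (ψ x) ∂P
      = ((∫ x, (ψ x).re ∂P : ℝ) : ℂ) - ((∫ x, (ψ x).im ∂P : ℝ) : ℂ) * Complex.I := by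
  rw [integral_conj, ← integral_re_add_im hψi]
  simp [sub_eq_add_neg]

theorem real_aux {Ω : Type*} (m1 m2 : MeasurableSpace Ω) [mΩ : MeasurableSpace Ω]
    (P : Measure Ω) [IsProbabilityMeasure P] (hm1 : m1 ≤ mΩ) (hm2 : m2 ≤ mΩ)
    (f g : Ω → ℝ) (hf : Measurable[m1] f) (hg : Measurable[m2] g)
    (hf1 : ∀ ω, |f ω| ≤ 1) (hg1 : ∀ ω, |g ω| ≤ 1) :
    |∫ ω, f ω * (g ω - ∫ x, g x ∂P) ∂P| ≤ 4 * @rosenblattAlpha Ω mΩ P m1 m2 := by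
  have hgi : Integrable g P :=
    Integrable.of_bound (hg.mono hm2 le_rfl).aestronglyMeasurable 1
      (Filter.Eventually.of_forall hg1)
  obtain ⟨A, hA, hA'⟩ := step_aux m1 P hm1 f (fun ω => g ω - ∫ x, g x ∂P) hf hf1
    (hgi.sub (integrable_const _)) (by
      rw [integral_sub hgi (integrable_const _)]; simp)
  have hAm := hm1 _ hA
  have hAi : Integrable (A.indicator (fun _ => (1:ℝ))) P :=
    (integrable_const _).indicator hAm
  have hIA : ∫ ω, A.indicator (fun _ => (1:ℝ)) ω ∂P = P.real A := by
    rw [integral_indicator hAm]; simp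
  obtain ⟨B, hB, hB'⟩ := step_aux m2 P hm2 g
    (fun ω => A.indicator (fun _ => (1:ℝ)) ω - P.real A) hg hg1
    (hAi.sub (integrable_const _)) (by
      rw [integral_sub hAi (integrable_const _), hIA]; simp)
  have hBm := hm2 _ hB
  have hgA : Integrable (fun ω => g ω * A.indicator (fun _ => (1:ℝ)) ω) P :=
    hAi.bdd_mul hgi.aestronglyMeasurable (Filter.Eventually.of_forall hg1)
  have e1 : ∫ ω in A, (g ω - ∫ x, g x ∂P) ∂P
      = ∫ ω, g ω * (A.indicator (fun _ => (1:ℝ)) ω - P.real A) ∂P := by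
    simp only [mul_sub]
    rw [integral_sub hgA (hgi.mul_const _),
      integral_sub hgi.integrableOn (integrable_const _), integral_mul_const]
    congr 1
    · rw [← integral_indicator hAm]
      congr 1
      ext ω
      by_cases h : ω ∈ A <;> simp [h]
    · simp [mul_comm]
  have e2 : ∫ ω in B, (A.indicator (fun _ => (1:ℝ)) ω - P.real A) ∂P
      = P.real (A ∩ B) - P.real A * P.real B := by
    rw [integral_sub hAi.integrableOn (integrable_const _), integral_indicator hAm]
    simp [Measure.restrict_restrict hAm, mul_comm]
  have e3 : P.real (A ∩ B) - P.real A * P.real B ≤ @rosenblattAlpha Ω mΩ P m1 m2 := by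
    refine (le_abs_self _).trans ?_
    refine le_csSup ⟨1, ?_⟩ ⟨A, B, hA, hB, rfl⟩
    rintro r ⟨A, B, -, -, rfl⟩
    change |P.real (A ∩ B) - P.real A * P.real B| ≤ 1
    have a1 : P.real (A ∩ B) ≤ 1 := measureReal_le_one
    have a2 : P.real A ≤ 1 := measureReal_le_one
    have a3 : P.real B ≤ 1 := measureReal_le_one
    have b1 : 0 ≤ P.real (A ∩ B) := measureReal_nonneg
    have b2 : 0 ≤ P.real A := measureReal_nonneg
    have b3 : 0 ≤ P.real B := measureReal_nonneg
    rw [abs_le]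
    constructor <;> nlinarith [mul_nonneg b2 b3, mul_le_one₀ a2 b3 a3]
  rw [e1] at hA'
  rw [e2] at hB'
  have := le_abs_self (∫ ω, g ω * (A.indicator (fun _ => (1:ℝ)) ω - P.real A) ∂P)
  linarith

/-- For complex random variables `φ, ψ` bounded by one and measurable with respect
to sub-σ-algebras `𝒜₁, 𝒜₂`, one has `|Cov(φ,ψ)| ≤ 16 α(𝒜₁,𝒜₂)`. -/
theorem abs_cov_le_mixing {Ω : Type*} [mΩ : MeasurableSpace Ω]
    (P : Measure Ω) [IsProbabilityMeasure P]
    (m1 m2 : MeasurableSpace Ω) (hm1 : m1 ≤ mΩ) (hm2 : m2 ≤ mΩ)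
    (φ ψ : Ω → ℂ) (hφ : Measurable[m1] φ) (hψ : Measurable[m2] ψ)
    (hφ1 : ∀ ω, ‖φ ω‖ ≤ 1) (hψ1 : ∀ ω, ‖ψ ω‖ ≤ 1) :
    ‖∫ ω, (φ ω - ∫ x, φ x ∂P) *
        (starRingEnd ℂ (ψ ω) - ∫ x, starRingEnd ℂ (ψ x) ∂P) ∂P‖
      ≤ 16 * @rosenblattAlpha Ω mΩ P m1 m2 := by
  have cre : Measurable[m1] (fun ω => (φ ω).re) := Complex.measurable_re.comp hφ
  have cim : Measurable[m1] (fun ω => (φ ω).im) := Complex.measurable_im.comp hφ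
  have dre : Measurable[m2] (fun ω => (ψ ω).re) := Complex.measurable_re.comp hψ
  have dim : Measurable[m2] (fun ω => (ψ ω).im) := Complex.measurable_im.comp hψ
  have cre1 : ∀ ω, |(φ ω).re| ≤ 1 := fun ω => (Complex.abs_re_le_norm _).trans (hφ1 ω)
  have cim1 : ∀ ω, |(φ ω).im| ≤ 1 := fun ω => (Complex.abs_im_le_norm _).trans (hφ1 ω)
  have dre1 : ∀ ω, |(ψ ω).re| ≤ 1 := fun ω => (Complex.abs_re_le_norm _).trans (hψ1 ω)
  have dim1 : ∀ ω, |(ψ ω).im| ≤ 1 := fun ω => (Complex.abs_im_le_norm _).trans (hψ1 ω)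
  have r1 := real_aux m1 m2 (mΩ := mΩ) P hm1 hm2 _ _ cre dre cre1 dre1
  have r2 := real_aux m1 m2 (mΩ := mΩ) P hm1 hm2 _ _ cre dim cre1 dim1
  have r3 := real_aux m1 m2 (mΩ := mΩ) P hm1 hm2 _ _ cim dre cim1 dre1
  have r4 := real_aux m1 m2 (mΩ := mΩ) P hm1 hm2 _ _ cim dim cim1 dim1
  have hψi : Integrable ψ P :=
    Integrable.of_bound (hψ.mono hm2 le_rfl).aestronglyMeasurable 1
      (Filter.Eventually.of_forall hψ1)
  have hRi : Integrable (fun ω => (ψ ω).re) P := hψi.re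
  have hIi : Integrable (fun ω => (ψ ω).im) P := hψi.im
  have hc0 := conj_aux (mΩ := mΩ) P ψ hψi
  set ER := ∫ x, (ψ x).re ∂P with hER
  set EI := ∫ x, (ψ x).im ∂P with hEI
  set K := ∫ x, φ x ∂P
  have hconj : ∫ x, starRingEnd ℂ (ψ x) ∂P = (ER : ℂ) - EI * Complex.I := hc0
  have hR' : Integrable (fun ω => (ψ ω).re - ER) P := hRi.sub (integrable_const _)
  have hI' : Integrable (fun ω => (ψ ω).im - EI) P := hIi.sub (integrable_const _)
  have hR0 : ∫ ω, ((ψ ω).re - ER) ∂P = 0 := by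
    rw [integral_sub hRi (integrable_const _)]; simp [hER]
  have hI0 : ∫ ω, ((ψ ω).im - EI) ∂P = 0 := by
    rw [integral_sub hIi (integrable_const _)]; simp [hEI]
  have bd : ∀ (f h : Ω → ℝ), Measurable[m1] f → (∀ ω, |f ω| ≤ 1) → Integrable h P →
      Integrable (fun ω => f ω * h ω) P := fun f h hf hf1 hh =>
    hh.bdd_mul (hf.mono hm1 le_rfl).aestronglyMeasurable (Filter.Eventually.of_forall hf1)
  have ofR : ∀ f : Ω → ℝ, Integrable f P → Integrable (fun ω => (f ω : ℂ)) P :=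
    fun f h => h.ofReal
  have i1 := ofR _ (bd _ _ cre cre1 hR')
  have i2 := (ofR _ (bd _ _ cre cre1 hI')).const_mul Complex.I
  have i3 := (ofR _ (bd _ _ cim cim1 hR')).const_mul Complex.I
  have i4 := ofR _ (bd _ _ cim cim1 hI')
  have i5 := (ofR _ hR').const_mul K
  have i6 := (ofR _ hI').const_mul (K * Complex.I)
  have key : ∫ ω, (φ ω - K) * (starRingEnd ℂ (ψ ω) - ∫ x, starRingEnd ℂ (ψ x) ∂P) ∂P
      = ((∫ ω, (φ ω).re * ((ψ ω).re - ER) ∂P : ℝ) : ℂ)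
        - Complex.I * ((∫ ω, (φ ω).re * ((ψ ω).im - EI) ∂P : ℝ) : ℂ)
        + Complex.I * ((∫ ω, (φ ω).im * ((ψ ω).re - ER) ∂P : ℝ) : ℂ)
        + ((∫ ω, (φ ω).im * ((ψ ω).im - EI) ∂P : ℝ) : ℂ)
        - K * ((∫ ω, ((ψ ω).re - ER) ∂P : ℝ) : ℂ)
        + K * Complex.I * ((∫ ω, ((ψ ω).im - EI) ∂P : ℝ) : ℂ) := by
    rw [hconj]
    simp only [← integral_complex_ofReal, ← integral_const_mul]
    rw [← integral_sub' i1 i2, ← integral_add' (i1.sub i2) i3,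
      ← integral_add' ((i1.sub i2).add i3) i4,
      ← integral_sub' (((i1.sub i2).add i3).add i4) i5,
      ← integral_add' ((((i1.sub i2).add i3).add i4).sub i5) i6]
    congr 1
    ext ω
    have h1 : φ ω = (φ ω).re + (φ ω).im * Complex.I := (Complex.re_add_im _).symm
    have h2 : starRingEnd ℂ (ψ ω) = (ψ ω).re - (ψ ω).im * Complex.I := by
      apply Complex.ext <;> simp
    rw [h2]
    conv_lhs => rw [h1]
    simp only [Pi.add_apply, Pi.sub_apply, Complex.ofReal_mul, Complex.ofReal_sub]
    linear_combination (-((φ ω).im : ℂ) * ((ψ ω).im - EI)) * Complex.I_sq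
  rw [key, hR0, hI0]
  have nn : ∀ x : ℝ, ‖(x : ℂ)‖ = |x| := fun x => Complex.norm_real x
  simp only [Complex.ofReal_zero, mul_zero, sub_zero, add_zero]
  refine (norm_add_le _ _).trans ?_
  refine (add_le_add_left ((norm_add_le _ _).trans
    (add_le_add_left (norm_sub_le _ _) _)) _).trans ?_
  simp only [norm_mul, Complex.norm_I, one_mul, nn]
  linarith
end
end

section
/- Let Z_k = (X_k,Y_k), k = 1,…,n, be random variables with values in [0,1]^d × [0,1]^d such that X_k and Y_k have the same distribution for every k. Let 𝒜_k be the σ-algebra generated by Z_k, and set α(ℓ) = sup_{|j−k| ≥ ℓ} α(𝒜_j,𝒜_k) for ℓ ≥ 1. Then for every ξ ∈ ℝ^d, E( | (1/n) Σ_{k=1}^n e^{i⟨ξ,X_k⟩} − (1/n) Σ_{k=1}^n e^{i⟨ξ,Y_k⟩} |² ) ≤ 4/n + (128/n) Σ_{ℓ=1}^{n−1} α(ℓ). -/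
open MeasureTheory ProbabilityTheory

noncomputable section

/-- The mixing sequence `α(ℓ) = sup_{|j−k| ≥ ℓ} α(σ(Z_j), σ(Z_k))` of a finite
family of random variables. -/
def mixingSeq {Ω : Type*} [MeasurableSpace Ω] (P : Measure Ω) {n : ℕ}
    {E : Type*} [MeasurableSpace E] (Z : Fin n → Ω → E) (ℓ : ℕ) : ℝ :=
  sSup {r | ∃ j k : Fin n, ℓ ≤ Nat.dist (j : ℕ) (k : ℕ) ∧
    r = rosenblattAlpha P (MeasurableSpace.comap (Z j) inferInstance)
          (MeasurableSpace.comap (Z k) inferInstance)}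

lemma aux_layer {Ω : Type*} [MeasurableSpace Ω] (P : Measure Ω) [IsProbabilityMeasure P]
    (f g : Ω → ℝ) (hf : Measurable f) (h0 : ∀ ω, 0 ≤ f ω) (h1 : ∀ ω, f ω ≤ 1)
    (hg : Integrable g P) (c : ℝ) (hc : ∀ s : ℝ, |∫ ω in {ω | s < f ω}, g ω ∂P| ≤ c) :
    |∫ ω, f ω * g ω ∂P| ≤ c := by
  have key : ∀ ω, f ω * g ω = ∫ s in Set.Ioc (0:ℝ) 1, {p : Ω × ℝ | p.2 < f p.1}.indicator (fun p => g p.1) (ω, s) := by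
    intro ω
    have : (fun s => {p : Ω × ℝ | p.2 < f p.1}.indicator (fun p => g p.1) (ω, s))
        = (Set.Iio (f ω)).indicator (fun _ => g ω) := by
      ext s; simp [Set.indicator]
    rw [this, setIntegral_indicator measurableSet_Iio]
    have h : Set.Ioc (0:ℝ) 1 ∩ Set.Iio (f ω) = Set.Ioo 0 (f ω) := by
      ext s
      simp only [Set.mem_inter_iff, Set.mem_Ioc, Set.mem_Iio, Set.mem_Ioo]
      constructor
      · rintro ⟨⟨a, b⟩, c⟩; exact ⟨a, c⟩
      · rintro ⟨a, b⟩; exact ⟨⟨a, b.le.trans (h1 ω)⟩, b⟩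
    rw [h, setIntegral_const]
    simp [Measure.real, h0 ω]
  have hms : MeasurableSet {p : Ω × ℝ | p.2 < f p.1} :=
    measurableSet_lt measurable_snd (hf.comp measurable_fst)
  have hint : Integrable (fun p : Ω × ℝ => {p : Ω × ℝ | p.2 < f p.1}.indicator (fun p => g p.1) p)
      (P.prod (volume.restrict (Set.Ioc (0:ℝ) 1))) :=
    (hg.comp_fst _).indicator hms
  simp_rw [key]
  rw [integral_integral_swap (f := fun ω s => {p : Ω × ℝ | p.2 < f p.1}.indicator (fun p => g p.1) (ω, s)) hint]
  have hb : ∀ s : ℝ, ‖∫ ω, {p : Ω × ℝ | p.2 < f p.1}.indicator (fun p => g p.1) (ω, s) ∂P‖ ≤ c := by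
    intro s
    have : (fun ω => {p : Ω × ℝ | p.2 < f p.1}.indicator (fun p => g p.1) (ω, s))
        = {ω | s < f ω}.indicator g := by
      ext ω; simp [Set.indicator]
    rw [this, integral_indicator (measurableSet_lt measurable_const hf)]
    exact hc s
  have := norm_setIntegral_le_of_norm_le_const (μ := volume) (s := Set.Ioc (0:ℝ) 1) (C := c)
    (f := fun s => ∫ ω, {p : Ω × ℝ | p.2 < f p.1}.indicator (fun p => g p.1) (ω, s) ∂P)
    (by simp) (fun s _ => hb s)
  simpa [Measure.real] using this

lemma aux_layer2 {Ω : Type*} [MeasurableSpace Ω] (P : Measure Ω) [IsProbabilityMeasure P]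
    (f g : Ω → ℝ) (hf : Measurable f) (h1 : ∀ ω, |f ω| ≤ 2)
    (hg : Integrable g P) (hg0 : ∫ ω, g ω ∂P = 0)
    (c : ℝ) (hc : ∀ s : ℝ, |∫ ω in {ω | s < f ω}, g ω ∂P| ≤ c) :
    |∫ ω, f ω * g ω ∂P| ≤ 4 * c := by
  have hL := aux_layer P (fun ω => (f ω + 2) / 4) g (by fun_prop)
    (fun ω => by have := abs_le.1 (h1 ω); linarith)
    (fun ω => by have := abs_le.1 (h1 ω); linarith) hg c (fun s => by
      have := hc (4 * s - 2)
      have h : {ω | s < (f ω + 2) / 4} = {ω | 4 * s - 2 < f ω} := by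
        ext ω; simp only [Set.mem_setOf_eq]; constructor <;> intro h <;> linarith
      rw [h]; exact this)
  have hfg : Integrable (fun ω => f ω * g ω) P :=
    hg.bdd_mul (c := 2) hf.aestronglyMeasurable (Filter.Eventually.of_forall h1)
  have : ∫ ω, (f ω + 2) / 4 * g ω ∂P = (∫ ω, f ω * g ω ∂P) / 4 := by
    have : ∀ ω, (f ω + 2) / 4 * g ω = (1/4) * (f ω * g ω) + (1/2) * g ω := fun ω => by ring
    simp_rw [this]
    rw [integral_add (hfg.const_mul _) (hg.const_mul _), integral_const_mul, integral_const_mul, hg0]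
    ring
  rw [this, abs_div, abs_of_pos (by norm_num : (0:ℝ) < 4)] at hL
  linarith

lemma aux_alpha_bdd {Ω : Type*} [MeasurableSpace Ω] (P : Measure Ω) [IsProbabilityMeasure P]
    (m1 m2 : MeasurableSpace Ω) : BddAbove {r | ∃ A B : Set Ω, MeasurableSet[m1] A ∧ MeasurableSet[m2] B ∧
    r = |(P (A ∩ B)).toReal - (P A).toReal * (P B).toReal|} := by
  refine ⟨1, ?_⟩
  rintro r ⟨A, B, -, -, rfl⟩
  have h : ∀ S : Set Ω, 0 ≤ (P S).toReal ∧ (P S).toReal ≤ 1 := fun S =>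
    ⟨ENNReal.toReal_nonneg, measureReal_le_one (μ := P)⟩
  have a := h (A ∩ B)
  have b := h A
  have c := h B
  rw [abs_le]
  constructor <;> nlinarith

lemma aux_cov {Ω : Type*} [MeasurableSpace Ω] (P : Measure Ω) [IsProbabilityMeasure P]
    {E : Type*} [MeasurableSpace E] (Z W : Ω → E) (hZ : Measurable Z) (hW : Measurable W)
    (u v : E → ℝ) (hu : Measurable u) (hv : Measurable v)
    (hu2 : ∀ ω, |u (Z ω)| ≤ 2) (hv2 : ∀ ω, |v (W ω)| ≤ 2)
    (hv0 : ∫ ω, v (W ω) ∂P = 0) :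
    |∫ ω, u (Z ω) * v (W ω) ∂P| ≤ 16 * rosenblattAlpha P (MeasurableSpace.comap Z inferInstance)
          (MeasurableSpace.comap W inferInstance) := by
  have hvi : Integrable (fun ω => v (W ω)) P :=
    Integrable.of_bound (hv.comp hW).aestronglyMeasurable 2 (Filter.Eventually.of_forall hv2)
  set α := rosenblattAlpha P (MeasurableSpace.comap Z inferInstance)
          (MeasurableSpace.comap W inferInstance) with hα
  have := aux_layer2 P (fun ω => u (Z ω)) (fun ω => v (W ω)) (hu.comp hZ) hu2 hvi hv0 (4 * α) ?_
  · linarith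
  intro s
  set A : Set Ω := {ω | s < u (Z ω)} with hA
  have hAm : MeasurableSet A := measurableSet_lt measurable_const (hu.comp hZ)
  have hAi : Integrable (A.indicator (fun _ => (1:ℝ))) P := (integrable_const 1).indicator hAm
  have hgi : Integrable (fun ω => A.indicator (fun _ => (1:ℝ)) ω - P.real A) P :=
    hAi.sub (integrable_const _)
  have h2 := aux_layer2 P (fun ω => v (W ω)) (fun ω => A.indicator (fun _ => (1:ℝ)) ω - P.real A)
    (hv.comp hW) hv2 hgi (by
      rw [integral_sub hAi (integrable_const _), integral_indicator hAm]; simp) α ?_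
  · have h3 : ∫ ω, v (W ω) * (A.indicator (fun _ => (1:ℝ)) ω - P.real A) ∂P
        = ∫ ω in A, v (W ω) ∂P := by
      have : ∀ ω, v (W ω) * (A.indicator (fun _ => (1:ℝ)) ω - P.real A)
          = A.indicator (fun ω => v (W ω)) ω - P.real A * v (W ω) := by
        intro ω
        by_cases h : ω ∈ A <;> simp [h] <;> ring
      simp_rw [this]
      rw [integral_sub (hvi.indicator hAm) (hvi.const_mul _), integral_const_mul, hv0,
        integral_indicator hAm]
      simp
    rw [h3] at h2
    exact h2
  intro t
  set B : Set Ω := {ω | t < v (W ω)} with hB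
  have hBm : MeasurableSet B := measurableSet_lt measurable_const (hv.comp hW)
  have h4 : ∫ ω in B, (A.indicator (fun _ => (1:ℝ)) ω - P.real A) ∂P
      = (P (A ∩ B)).toReal - (P A).toReal * (P B).toReal := by
    rw [integral_sub hAi.integrableOn (integrable_const _), setIntegral_indicator hAm]
    simp [Measure.real, Set.inter_comm, mul_comm]
  rw [h4]
  refine le_csSup (aux_alpha_bdd P _ _) ⟨A, B, ?_, ?_, rfl⟩
  · exact ⟨{z | s < u z}, measurableSet_lt measurable_const hu, rfl⟩
  · exact ⟨{z | t < v z}, measurableSet_lt measurable_const hv, rfl⟩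

lemma aux_alpha_le {Ω : Type*} [MeasurableSpace Ω] (P : Measure Ω) {n : ℕ}
    {E : Type*} [MeasurableSpace E] (Z : Fin n → Ω → E) (j k : Fin n) :
    rosenblattAlpha P (MeasurableSpace.comap (Z j) inferInstance)
          (MeasurableSpace.comap (Z k) inferInstance) ≤ mixingSeq P Z (Nat.dist j k) := by
  refine le_csSup (Set.Finite.bddAbove ?_) ⟨j, k, le_rfl, rfl⟩
  refine (Set.finite_range (fun p : Fin n × Fin n =>
    rosenblattAlpha P (MeasurableSpace.comap (Z p.1) inferInstance)
          (MeasurableSpace.comap (Z p.2) inferInstance))).subset ?_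
  rintro r ⟨j, k, -, rfl⟩
  exact ⟨(j, k), rfl⟩

lemma aux_mix_nonneg {Ω : Type*} [MeasurableSpace Ω] (P : Measure Ω) {n : ℕ}
    {E : Type*} [MeasurableSpace E] (Z : Fin n → Ω → E) (l : ℕ) : 0 ≤ mixingSeq P Z l := by
  apply Real.sSup_nonneg
  rintro r ⟨j, k, -, rfl⟩
  apply Real.sSup_nonneg
  rintro r ⟨A, B, -, -, rfl⟩
  exact abs_nonneg _

lemma aux_sum {n : ℕ} (m : ℕ → ℝ) (hm : ∀ l, 0 ≤ m l) (j : Fin n) :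
    ∑ k ∈ Finset.univ.erase j, m (Nat.dist j k) ≤ 2 * ∑ l ∈ Finset.Icc 1 (n - 1), m l := by
  have hmem : ∀ k ∈ Finset.univ.erase j, Nat.dist j k ∈ Finset.Icc 1 (n - 1) := by
    intro k hk
    have h : (k : ℕ) ≠ j := fun h => (Finset.ne_of_mem_erase hk) (Fin.ext h)
    have := k.2
    have := j.2
    simp only [Finset.mem_Icc, Nat.dist]
    omega
  rw [← Finset.sum_fiberwise_of_maps_to hmem, Finset.mul_sum]
  refine Finset.sum_le_sum fun l _ => ?_
  rw [Finset.sum_congr rfl (g := fun _ => m l) (fun k hk => by rw [(Finset.mem_filter.1 hk).2])]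
  rw [Finset.sum_const, nsmul_eq_mul]
  refine mul_le_mul_of_nonneg_right ?_ (hm l)
  have : (Finset.filter (fun k : Fin n => Nat.dist j k = l) (Finset.univ.erase j)).card
      ≤ ({(j:ℕ) + l, (j:ℕ) - l} : Finset ℕ).card := by
    refine Finset.card_le_card_of_injOn (fun k => (k : ℕ)) ?_ (fun a _ b _ h => Fin.ext h)
    intro k hk
    have := (Finset.mem_filter.1 hk).2
    simp only [Finset.coe_insert, Finset.coe_singleton, Set.mem_insert_iff, Set.mem_singleton_iff]
    simp only [Nat.dist] at this
    omega
  exact_mod_cast this.trans Finset.card_le_two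

/-- Second moment of a sum. -/
lemma aux_main {Ω : Type*} [MeasurableSpace Ω] (P : Measure Ω) [IsProbabilityMeasure P] {n : ℕ}
    {E : Type*} [MeasurableSpace E] (Z : Fin n → Ω → E) (hZ : ∀ k, Measurable (Z k))
    (u v : E → ℝ) (hu : Measurable u) (hv : Measurable v)
    (huv : ∀ z, u z ^ 2 + v z ^ 2 ≤ 4)
    (hu0 : ∀ k, ∫ ω, u (Z k ω) ∂P = 0) (hv0 : ∀ k, ∫ ω, v (Z k ω) ∂P = 0) :
    ∫ ω, ((∑ k, u (Z k ω)) ^ 2 + (∑ k, v (Z k ω)) ^ 2) ∂P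
      ≤ n * (4 + 64 * ∑ l ∈ Finset.Icc 1 (n - 1), mixingSeq P Z l) := by
  have hu2 : ∀ z, |u z| ≤ 2 := fun z => abs_le_of_sq_le_sq (by nlinarith [huv z, sq_nonneg (v z)]) (by norm_num)
  have hv2 : ∀ z, |v z| ≤ 2 := fun z => abs_le_of_sq_le_sq (by nlinarith [huv z, sq_nonneg (u z)]) (by norm_num)
  have hI : ∀ w : E → ℝ, Measurable w → (∀ z, |w z| ≤ 2) → ∀ j k,
      Integrable (fun ω => w (Z j ω) * w (Z k ω)) P := by
    intro w hw hw2 j k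
    refine Integrable.of_bound ((hw.comp (hZ j)).mul (hw.comp (hZ k))).aestronglyMeasurable 4
      (Filter.Eventually.of_forall fun ω => ?_)
    rw [Real.norm_eq_abs, abs_mul]
    nlinarith [hw2 (Z j ω), hw2 (Z k ω), abs_nonneg (w (Z j ω)), abs_nonneg (w (Z k ω))]
  have hIs : ∀ j k, Integrable (fun ω => u (Z j ω) * u (Z k ω) + v (Z j ω) * v (Z k ω)) P :=
    fun j k => (hI u hu hu2 j k).add (hI v hv hv2 j k)
  have e : ∀ ω, ((∑ k, u (Z k ω)) ^ 2 + (∑ k, v (Z k ω)) ^ 2)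
      = ∑ j, ∑ k, (u (Z j ω) * u (Z k ω) + v (Z j ω) * v (Z k ω)) := by
    intro ω
    simp_rw [sq, Finset.sum_mul_sum, Finset.sum_add_distrib]
  simp_rw [e]
  rw [integral_finset_sum _ (fun j _ => integrable_finset_sum _ (fun k _ => hIs j k))]
  have hj : ∀ j : Fin n, ∫ ω, ∑ k, (u (Z j ω) * u (Z k ω) + v (Z j ω) * v (Z k ω)) ∂P
      ≤ 4 + 64 * ∑ l ∈ Finset.Icc 1 (n - 1), mixingSeq P Z l := by
    intro j
    rw [integral_finset_sum _ (fun k _ => hIs j k),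
      ← Finset.add_sum_erase _ _ (Finset.mem_univ j)]
    have hd : ∫ ω, (u (Z j ω) * u (Z j ω) + v (Z j ω) * v (Z j ω)) ∂P ≤ 4 := by
      calc _ ≤ ∫ _ω, (4:ℝ) ∂P := integral_mono (hIs j j) (integrable_const _) (fun ω => by
              have := huv (Z j ω); simp only []; nlinarith)
        _ = 4 := by simp
    have ho : ∀ k, ∫ ω, (u (Z j ω) * u (Z k ω) + v (Z j ω) * v (Z k ω)) ∂P
        ≤ 32 * mixingSeq P Z (Nat.dist j k) := by
      intro k
      rw [integral_add (hI u hu hu2 j k) (hI v hv hv2 j k)]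
      have a := aux_alpha_le P Z j k
      have b := (abs_le.1 (aux_cov P (Z j) (Z k) (hZ j) (hZ k) u u hu hu (fun _ => hu2 _) (fun _ => hu2 _) (hu0 k))).2
      have c := (abs_le.1 (aux_cov P (Z j) (Z k) (hZ j) (hZ k) v v hv hv (fun _ => hv2 _) (fun _ => hv2 _) (hv0 k))).2
      linarith
    have hs := Finset.sum_le_sum (s := Finset.univ.erase j) (fun k _ => ho k)
    rw [← Finset.mul_sum] at hs
    have := aux_sum (mixingSeq P Z) (aux_mix_nonneg P Z) j
    linarith
  calc _ ≤ ∑ _j : Fin n, (4 + 64 * ∑ l ∈ Finset.Icc 1 (n - 1), mixingSeq P Z l) :=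
        Finset.sum_le_sum (fun j _ => hj j)
    _ = _ := by simp; ring

/-- Second-moment bound on the difference of empirical characteristic functions
in terms of the Rosenblatt mixing coefficients of the couples `Z_k = (X_k, Y_k)`. -/
theorem empirical_charFun_diff_sq_le_mixing {d n : ℕ}
    (Ω : Type*) [MeasurableSpace Ω] (P : Measure Ω) [IsProbabilityMeasure P]
    (X Y : Fin n → Ω → (Fin d → ℝ))
    (hXmeas : ∀ k, Measurable (X k)) (hYmeas : ∀ k, Measurable (Y k))
    (hXYcube : ∀ k ω i, X k ω i ∈ Set.Icc (0 : ℝ) 1 ∧ Y k ω i ∈ Set.Icc (0 : ℝ) 1)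
    (hid : ∀ k, P.map (X k) = P.map (Y k)) (ξ : Fin d → ℝ) :
    ∫ ω, ‖(1 / n : ℂ) * ∑ k, Complex.exp (Complex.I * ∑ i, (ξ i : ℂ) * (X k ω i : ℂ))
        - (1 / n : ℂ) * ∑ k, Complex.exp (Complex.I * ∑ i, (ξ i : ℂ) * (Y k ω i : ℂ))‖ ^ 2 ∂P
      ≤ 4 / n + (128 / n) *
          ∑ ℓ ∈ Finset.Icc 1 (n - 1), mixingSeq P (fun k ω => (X k ω, Y k ω)) ℓ := by
  set S := ∑ ℓ ∈ Finset.Icc 1 (n - 1), mixingSeq P (fun k ω => (X k ω, Y k ω)) ℓ with hS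
  have hS0 : 0 ≤ S := Finset.sum_nonneg fun l _ => aux_mix_nonneg P _ l
  let th : (Fin d → ℝ) → ℝ := fun x => ∑ i, ξ i * x i
  have hth : Measurable th := by fun_prop
  let u : (Fin d → ℝ) × (Fin d → ℝ) → ℝ := fun z => Real.cos (th z.1) - Real.cos (th z.2)
  let v : (Fin d → ℝ) × (Fin d → ℝ) → ℝ := fun z => Real.sin (th z.1) - Real.sin (th z.2)
  have hexp : ∀ x : Fin d → ℝ, Complex.exp (Complex.I * ∑ i, (ξ i : ℂ) * (x i : ℂ))
      = (Real.cos (th x) : ℂ) + (Real.sin (th x) : ℂ) * Complex.I := by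
    intro x
    have : (∑ i, (ξ i : ℂ) * (x i : ℂ)) = ((th x : ℝ) : ℂ) := by simp [th]
    rw [this, mul_comm, Complex.exp_mul_I]
    simp
  have hz : ∀ w : (Fin d → ℝ) → ℝ, Measurable w → (∀ x, |w x| ≤ 1) → ∀ k,
      ∫ ω, (w (X k ω) - w (Y k ω)) ∂P = 0 := by
    intro w hw hw1 k
    have hi : ∀ T : Ω → (Fin d → ℝ), Measurable T → Integrable (fun ω => w (T ω)) P := fun T hT =>
      Integrable.of_bound (hw.comp hT).aestronglyMeasurable 1
        (Filter.Eventually.of_forall fun ω => hw1 _)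
    rw [integral_sub (hi _ (hXmeas k)) (hi _ (hYmeas k)),
      ← integral_map (hXmeas k).aemeasurable hw.aestronglyMeasurable,
      ← integral_map (hYmeas k).aemeasurable hw.aestronglyMeasurable, hid k, sub_self]
  have hmain := aux_main P (fun k ω => (X k ω, Y k ω)) (fun k => (hXmeas k).prodMk (hYmeas k)) u v
    (by fun_prop) (by fun_prop) (fun z => by
      simp only [u, v]
      nlinarith [Real.sin_sq_add_cos_sq (th z.1), Real.sin_sq_add_cos_sq (th z.2),
        sq_nonneg (Real.cos (th z.1) + Real.cos (th z.2)),
        sq_nonneg (Real.sin (th z.1) + Real.sin (th z.2))])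
    (hz (fun x => Real.cos (th x)) (by fun_prop) (fun x => Real.abs_cos_le_one _))
    (hz (fun x => Real.sin (th x)) (by fun_prop) (fun x => Real.abs_sin_le_one _))
  rw [← hS] at hmain
  have hpt : ∀ ω, ‖(1 / n : ℂ) * ∑ k, Complex.exp (Complex.I * ∑ i, (ξ i : ℂ) * (X k ω i : ℂ))
        - (1 / n : ℂ) * ∑ k, Complex.exp (Complex.I * ∑ i, (ξ i : ℂ) * (Y k ω i : ℂ))‖ ^ 2
      = (1 / (n:ℝ)) ^ 2 * ((∑ k, u (X k ω, Y k ω)) ^ 2 + (∑ k, v (X k ω, Y k ω)) ^ 2) := by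
    intro ω
    rw [← mul_sub, ← Finset.sum_sub_distrib, norm_mul, mul_pow]
    congr 1
    · simp
    · have : ∑ k, (Complex.exp (Complex.I * ∑ i, (ξ i : ℂ) * (X k ω i : ℂ))
          - Complex.exp (Complex.I * ∑ i, (ξ i : ℂ) * (Y k ω i : ℂ)))
          = ((∑ k, u (X k ω, Y k ω) : ℝ) : ℂ) + ((∑ k, v (X k ω, Y k ω) : ℝ) : ℂ) * Complex.I := by
        rw [Complex.ofReal_sum, Complex.ofReal_sum, Finset.sum_mul, ← Finset.sum_add_distrib]
        refine Finset.sum_congr rfl fun k _ => ?_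
        rw [hexp, hexp]
        simp only [u, v, Complex.ofReal_sub]
        ring
      rw [this, ← Complex.normSq_eq_norm_sq, Complex.normSq_add_mul_I]
  simp_rw [hpt]
  rw [integral_const_mul]
  rcases Nat.eq_zero_or_pos n with h0 | hn
  · subst h0; simp
  have hn' : (0:ℝ) < n := by exact_mod_cast hn
  calc _ ≤ (1 / (n:ℝ)) ^ 2 * (n * (4 + 64 * S)) := mul_le_mul_of_nonneg_left hmain (by positivity)
    _ = 4 / n + 64 / n * S := by field_simp
    _ ≤ 4 / n + 128 / n * S := by gcongr; norm_num
end
end
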